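/- Let k ∈ {0,1}. Suppose m₀ is the unique maximizer of 𝑝̃ on [0,1], that L₁^{(ℓ)}(m₀) = 0 for all 0 ≤ ℓ ≤ 2k, and that L₁^{(2k+1)}(m₀) > 0. Set W = (M − N·m₀)/N^{(2k+1)/(2k+2)}, where M = ∑σ_i and σ is drawn from the weighted Curie–Weiss Gibbs measure, and let d = 2·L₁^{(2k+1)}(m₀)/((2k+2)!·L₂(m₀)). Let Z be a real random variable with probability density p(z) = c₁·exp(−d·z^{2k+2}), c₁ the normalizing constant. Then there exists a constant K independent of N such that sup_{z∈ℝ} |ℙ(W ≤ z) − ℙ(Z ≤ z)| ≤ K·N^{−1/(2k+2)} for all N ≥ 1. -/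

import Mathlib

open Real Finset MeasureTheory

noncomputable section

/-- Dimer configurations (matchings of the complete graph on `Fin N`), encoded as
involutions of `Fin N`: fixed points are monomers, 2-cycles are dimers. -/
abbrev Dimer (N : ℕ) := {f : Fin N → Fin N // ∀ i, f (f i) = i}

/-- The set of monomers (dimer-free vertices) of a dimer configuration. -/
def monomers {N : ℕ} (D : Dimer N) : Finset (Fin N) :=
  Finset.univ.filter fun i => D.1 i = i

/-- Monomer density `m(D) = |𝓜(D)|/N`. -/
def mDim {N : ℕ} (D : Dimer N) : ℝ := ((monomers D).card : ℝ) / N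

/-- The parameter `b = (log N)/2 + h - J`. -/
def bIMD (N : ℕ) (J h : ℝ) : ℝ := Real.log N / 2 + h - J

/-- The Gibbs weight `exp(-H(D)) = exp(N (a m(D)^2 + b m(D)))` with `a = J`. -/
def wDim (N : ℕ) (J h : ℝ) (D : Dimer N) : ℝ :=
  Real.exp (N * (J * mDim D ^ 2 + bIMD N J h * mDim D))

/-- The probability of an event `A` under the IMD Gibbs measure. -/
def probDim (N : ℕ) (J h : ℝ) (A : Dimer N → Prop) : ℝ :=
  (∑ D : Dimer N, Set.indicator {D | A D} (wDim N J h) D) / ∑ D : Dimer N, wDim N J h D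

/-- The conditional probability `ℙ(A | B)` under the IMD Gibbs measure. -/
def condProbDim (N : ℕ) (J h : ℝ) (A B : Dimer N → Prop) : ℝ :=
  (∑ D : Dimer N, Set.indicator {D | A D ∧ B D} (wDim N J h) D) /
    ∑ D : Dimer N, Set.indicator {D | B D} (wDim N J h) D

/-- `g(x) = (√(e^{4x} + 4 e^{2x}) - e^{2x})/2`. -/
def gFun (x : ℝ) : ℝ := (Real.sqrt (Real.exp (4*x) + 4 * Real.exp (2*x)) - Real.exp (2*x)) / 2

/-- `τ(x) = (2x-1)J + h`. -/
def tauFun (J h x : ℝ) : ℝ := (2*x - 1) * J + h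

/-- `𝑝̃(m) = -J m² - (1 - g(τ(m)) + log(1 - g(τ(m))))/2`. -/
def ptilde (J h m : ℝ) : ℝ :=
  -J * m^2 - (1 - gFun (tauFun J h m) + Real.log (1 - gFun (tauFun J h m))) / 2

/-- The CDF of a centered Gaussian with variance `v`, evaluated at `z`. -/
def gaussCDF (v : ℝ) (z : ℝ) : ℝ :=
  (ProbabilityTheory.gaussianReal 0 (Real.toNNReal v) (Set.Iic z)).toReal

/-- Spin configurations `Σ = {0,1}^N`. -/
abbrev Config (N : ℕ) := Fin N → Bool

/-- `𝓐(σ) = {i : σ_i = 1}`. -/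
def ASet {N : ℕ} (σ : Config N) : Finset (Fin N) := Finset.univ.filter fun i => σ i = true

/-- `M(σ) = ∑ σ_i`. -/
def Msum {N : ℕ} (σ : Config N) : ℕ := (ASet σ).card

/-- Magnetization `m(σ) = M(σ)/N`. -/
def mConf {N : ℕ} (σ : Config N) : ℝ := (Msum σ : ℝ) / N

/-- `D(σ)`: the number of dimer configurations `D` with `𝓜(D) = 𝓐(σ)`. -/
def Dcount (N : ℕ) (σ : Config N) : ℕ :=
  (Finset.univ.filter fun D : Dimer N => monomers D = ASet σ).card

/-- The weight `D(σ) exp(-H(σ))` of the weighted Curie–Weiss model. -/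
def wConf (N : ℕ) (J h : ℝ) (σ : Config N) : ℝ :=
  (Dcount N σ : ℝ) * Real.exp (N * (J * mConf σ ^ 2 + bIMD N J h * mConf σ))

/-- The probability of an event `A` under the weighted Curie–Weiss Gibbs measure. -/
def probConf (N : ℕ) (J h : ℝ) (A : Config N → Prop) : ℝ :=
  (∑ σ : Config N, Set.indicator {σ | A σ} (wConf N J h) σ) / ∑ σ : Config N, wConf N J h σ

/-- Expectation under the weighted Curie–Weiss Gibbs measure. -/
def EConf (N : ℕ) (J h : ℝ) (f : Config N → ℝ) : ℝ :=
  (∑ σ : Config N, wConf N J h σ * f σ) / ∑ σ : Config N, wConf N J h σ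

/-- `L₁(m) = 2(1-m)(m² - (1-m)e^{2τ(m)})/((1-m) + e^{2τ(m)})`. -/
def Lone (J h m : ℝ) : ℝ :=
  2*(1-m)*(m^2 - (1-m)*Real.exp (2 * tauFun J h m)) / ((1-m) + Real.exp (2 * tauFun J h m))

/-- `L₂(m) = 4(1-m)(m² + (1-m)e^{2τ(m)})/((1-m) + e^{2τ(m)})`. -/
def Ltwo (J h m : ℝ) : ℝ :=
  4*(1-m)*(m^2 + (1-m)*Real.exp (2 * tauFun J h m)) / ((1-m) + Real.exp (2 * tauFun J h m))

/-- The configuration obtained from `σ` by setting the spins at `u, v` to `s, t`. -/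
def upd {N : ℕ} (σ : Config N) (u v : Fin N) (s t : Bool) : Config N :=
  fun i => if i = u then s else if i = v then t else σ i

/-- The edges of the complete graph, enumerated as ordered pairs `u < v`. -/
def cEdges (N : ℕ) : Finset (Fin N × Fin N) := Finset.univ.filter fun p => p.1 < p.2

/-- The probability of resampling the pair of spins at `(u,v)` to `(s,t)`:
the conditional distribution of `(σ_u, σ_v)` given `(σ_i)_{i ≠ u,v}`. -/
def qCond (N : ℕ) (J h : ℝ) (σ : Config N) (u v : Fin N) (s t : Bool) : ℝ :=
  wConf N J h (upd σ u v s t) / ∑ st : Bool × Bool, wConf N J h (upd σ u v st.1 st.2)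

/-- `E[F(σ, σ') | σ]` for the exchangeable pair `(σ, σ')` obtained by resampling the
spins at a uniformly chosen edge. -/
def condE2 (N : ℕ) (J h : ℝ) (F : Config N → Config N → ℝ) (σ : Config N) : ℝ :=
  ((cEdges N).card : ℝ)⁻¹ * ∑ p ∈ cEdges N, ∑ st : Bool × Bool,
    qCond N J h σ p.1 p.2 st.1 st.2 * F σ (upd σ p.1 p.2 st.1 st.2)

/-- The weight of the Gibbs measure conditioned on the event `S`. -/
def wCond (N : ℕ) (J h : ℝ) (S : Config N → Prop) (σ : Config N) : ℝ :=
  Set.indicator {σ | S σ} (wConf N J h) σ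

/-- `ℙ_ℓ(A) = ℙ(A | S)`, probability under the conditioned Gibbs measure. -/
def probL (N : ℕ) (J h : ℝ) (S A : Config N → Prop) : ℝ :=
  (∑ σ : Config N, Set.indicator {σ | A σ} (wCond N J h S) σ) / ∑ σ : Config N, wCond N J h S σ

/-- Expectation under the conditioned Gibbs measure `ℙ(·|S)`. -/
def EL (N : ℕ) (J h : ℝ) (S : Config N → Prop) (f : Config N → ℝ) : ℝ :=
  (∑ σ : Config N, wCond N J h S σ * f σ) / ∑ σ : Config N, wCond N J h S σ

/-- Resampling probability for the conditioned measure `ℙ(·|S)`. -/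
def qCondL (N : ℕ) (J h : ℝ) (S : Config N → Prop) (σ : Config N) (u v : Fin N)
    (s t : Bool) : ℝ :=
  wCond N J h S (upd σ u v s t) / ∑ st : Bool × Bool, wCond N J h S (upd σ u v st.1 st.2)

/-- `E_ℓ[F(σ, σ') | σ]` for the exchangeable pair under the conditioned measure. -/
def condE2L (N : ℕ) (J h : ℝ) (S : Config N → Prop) (F : Config N → Config N → ℝ)
    (σ : Config N) : ℝ :=
  ((cEdges N).card : ℝ)⁻¹ * ∑ p ∈ cEdges N, ∑ st : Bool × Bool,
    qCondL N J h S σ p.1 p.2 st.1 st.2 * F σ (upd σ p.1 p.2 st.1 st.2)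

/-- The maximizer set `O` of `𝑝̃` on `[0,1]`. -/
def maxSet (J h : ℝ) : Set ℝ :=
  {x | x ∈ Set.Icc (0:ℝ) 1 ∧ ∀ y ∈ Set.Icc (0:ℝ) 1, ptilde J h y ≤ ptilde J h x}

end

/-- Number of dimer configurations with `N % 2 + 2 * j` monomers. -/
noncomputable def dimerCount (N j : ℕ) : ℝ :=
  (N.factorial : ℝ) /
    ((N % 2 + 2 * j).factorial * 2 ^ (N / 2 - j) * (N / 2 - j).factorial)

lemma card_perm_cycleType_replicate_two (N n : ℕ) (hn : 2 * n ≤ N) :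
    ((Finset.univ.filter fun g : Equiv.Perm (Fin N) =>
        g.cycleType = Multiset.replicate n 2).card : ℝ) =
      (N.factorial : ℝ) / ((N - 2 * n).factorial * 2 ^ n * n.factorial) := by
  have key := Equiv.Perm.card_of_cycleType_mul_eq (Fin N) (Multiset.replicate n 2)
  have hsum : (Multiset.replicate n 2).sum = 2 * n := by simp [mul_comm]
  have hprod : ∏ i ∈ (Multiset.replicate n 2).toFinset,
      ((Multiset.replicate n 2).count i).factorial = n.factorial := by
    rcases Nat.eq_zero_or_pos n with rfl | h
    · simp
    · rw [Multiset.toFinset_replicate, if_neg h.ne']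
      simp
  rw [hsum, hprod, Multiset.prod_replicate, Fintype.card_fin, if_pos] at key
  · rw [eq_div_iff (by positivity)]
    exact_mod_cast key
  · exact ⟨hn, fun a ha => (Multiset.eq_of_mem_replicate ha).ge⟩

lemma card_monomers_add_card_support {N : ℕ} (D : Dimer N) :
    (monomers D).card + (Function.Involutive.toPerm D.1 D.2).support.card = N := by
  have h : (Function.Involutive.toPerm D.1 D.2).support =
      Finset.univ.filter fun i => ¬ D.1 i = i := by
    ext i
    rw [Equiv.Perm.mem_support, Finset.mem_filter]
    exact ⟨fun h => ⟨Finset.mem_univ _, h⟩, fun h => h.2⟩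
  rw [h, monomers, Finset.card_filter_add_card_filter_not]
  simp

lemma cycleType_toPerm {N : ℕ} (D : Dimer N) :
    (Function.Involutive.toPerm D.1 D.2).cycleType = Multiset.replicate
      (Multiset.card (Function.Involutive.toPerm D.1 D.2).cycleType) 2 := by
  have hsq : (Function.Involutive.toPerm D.1 D.2) ^ 2 = 1 := by
    refine Equiv.ext fun i => ?_
    exact D.2 i
  exact Multiset.eq_replicate.mpr ⟨rfl, Equiv.Perm.pow_prime_eq_one_iff.mp hsq⟩

lemma card_dimer_of_card_monomers (N j : ℕ) (hj : j ≤ N / 2) :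
    ((Finset.univ.filter fun D : Dimer N => (monomers D).card = N % 2 + 2 * j).card : ℝ) =
      dimerCount N j := by
  have hN : N - 2 * (N / 2 - j) = N % 2 + 2 * j := by omega
  rw [dimerCount, ← hN, ← card_perm_cycleType_replicate_two N (N / 2 - j) (by omega)]
  congr 1
  refine Finset.card_bij (fun D _ => Function.Involutive.toPerm D.1 D.2) ?_ ?_ ?_
  · intro D hD
    simp only [Finset.mem_filter, Finset.mem_univ, true_and] at hD ⊢
    have hs := Equiv.Perm.sum_cycleType (Function.Involutive.toPerm D.1 D.2)
    have hrep := cycleType_toPerm D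
    have hc := card_monomers_add_card_support D
    rw [hrep] at hs ⊢
    simp only [Multiset.sum_replicate, smul_eq_mul] at hs
    congr 1
    omega
  · intro D _ D' _ h
    ext i
    exact congrArg Fin.val (Equiv.congr_fun h i)
  · intro g hg
    simp only [Finset.mem_filter, Finset.mem_univ, true_and] at hg
    have hsq : g ^ 2 = 1 := by
      refine Equiv.Perm.pow_prime_eq_one_iff.mpr fun c hc => ?_
      rw [hg] at hc
      exact Multiset.eq_of_mem_replicate hc
    have hinv : ∀ i, g (g i) = i := fun i => by
      have := Equiv.congr_fun hsq i
      simpa [pow_two] using this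
    have heq : Function.Involutive.toPerm g hinv = g := by ext i; rfl
    refine ⟨⟨g, hinv⟩, ?_, heq⟩
    have hc := card_monomers_add_card_support (⟨g, hinv⟩ : Dimer N)
    have hs := Equiv.Perm.sum_cycleType g
    rw [hg] at hs
    simp only [Multiset.sum_replicate, smul_eq_mul] at hs
    simp only [heq] at hc
    simp only [Finset.mem_filter, Finset.mem_univ, true_and]
    omega

lemma sum_Dcount_mul (N : ℕ) (g : ℕ → ℝ) :
    ∑ σ : Config N, (Dcount N σ : ℝ) * g (Msum σ) =
      ∑ j ∈ Finset.range (N / 2 + 1), dimerCount N j * g (N % 2 + 2 * j) := by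
  classical
  have hleft : ∑ σ : Config N, (Dcount N σ : ℝ) * g (Msum σ) =
      ∑ D : Dimer N, g (monomers D).card := by
    have h1 : ∀ σ : Config N, (Dcount N σ : ℝ) * g (Msum σ) =
        ∑ D : Dimer N, if monomers D = ASet σ then g (monomers D).card else 0 := by
      intro σ
      rw [← Finset.sum_filter, Dcount, ← nsmul_eq_mul, ← Finset.sum_const]
      refine Finset.sum_congr rfl fun D hD => ?_
      rw [(Finset.mem_filter.mp hD).2, Msum]
    simp_rw [h1]
    rw [Finset.sum_comm]
    refine Finset.sum_congr rfl fun D _ => ?_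
    rw [Finset.sum_eq_single (fun i => decide (i ∈ monomers D))]
    · rw [if_pos]
      ext i; simp [ASet]
    · intro σ _ hσ
      rw [if_neg]
      intro h
      apply hσ
      funext i
      rw [h]
      by_cases hi : σ i = true <;> simp [ASet, hi]
    · simp
  have hmaps : ∀ D ∈ (Finset.univ : Finset (Dimer N)),
      ((monomers D).card / 2) ∈ Finset.range (N / 2 + 1) := by
    intro D _
    have := card_monomers_add_card_support D
    rw [Finset.mem_range]; omega
  have hmod : ∀ D : Dimer N, (monomers D).card % 2 = N % 2 := by
    intro D
    have hc := card_monomers_add_card_support D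
    have hs := Equiv.Perm.sum_cycleType (Function.Involutive.toPerm D.1 D.2)
    have hrep := cycleType_toPerm D
    rw [hrep] at hs
    simp only [Multiset.sum_replicate, smul_eq_mul] at hs
    omega
  rw [hleft, ← Finset.sum_fiberwise_of_maps_to hmaps]
  refine Finset.sum_congr rfl fun j hj => ?_
  rw [← card_dimer_of_card_monomers N j (by rw [Finset.mem_range] at hj; omega),
    ← nsmul_eq_mul, ← Finset.sum_const]
  refine Finset.sum_congr ?_ fun D hD => ?_
  · ext D
    simp only [Finset.mem_filter, Finset.mem_univ, true_and]
    have := hmod D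
    omega
  · have := hmod D
    have h2 := (Finset.mem_filter.mp hD).2
    congr 1

/-- Total Gibbs weight of the configurations with `N % 2 + 2 * j` monomers. -/
noncomputable def levelWeight (J h : ℝ) (N j : ℕ) : ℝ :=
  dimerCount N j * Real.exp (N * (J * (((N % 2 + 2 * j : ℕ) : ℝ) / N) ^ 2 +
    bIMD N J h * (((N % 2 + 2 * j : ℕ) : ℝ) / N)))

lemma probConf_eq_levelWeight (N : ℕ) (J h : ℝ) (P : ℕ → Prop) [DecidablePred P] :
    probConf N J h (fun σ => P (Msum σ)) =
      (∑ j ∈ Finset.range (N / 2 + 1),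
        if P (N % 2 + 2 * j) then levelWeight J h N j else 0) /
        ∑ j ∈ Finset.range (N / 2 + 1), levelWeight J h N j := by
  rw [probConf]
  congr 1
  · have := sum_Dcount_mul N (fun r => if P r then
      Real.exp (N * (J * ((r : ℝ) / N) ^ 2 + bIMD N J h * ((r : ℝ) / N))) else 0)
    simp only [mul_ite, mul_zero] at this
    simp only [levelWeight]
    rw [← this]
    refine Finset.sum_congr rfl fun σ _ => ?_
    by_cases hP : P (Msum σ) <;> simp [hP, wConf, mConf]
  · exact sum_Dcount_mul N
      (fun r => Real.exp (N * (J * ((r : ℝ) / N) ^ 2 + bIMD N J h * ((r : ℝ) / N))))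

lemma dimerCount_pos (N j : ℕ) : 0 < dimerCount N j := by
  unfold dimerCount; positivity

lemma levelWeight_pos (J h : ℝ) (N j : ℕ) : 0 < levelWeight J h N j :=
  mul_pos (dimerCount_pos N j) (Real.exp_pos _)

/-- Monomer density of the configurations with `N % 2 + 2 * j` monomers. -/
noncomputable def levelDensity (N j : ℕ) : ℝ := ((N % 2 + 2 * j : ℕ) : ℝ) / N

/-- The exponential rate of the level weights as a function of the monomer density. -/
noncomputable def rateFun (J h m : ℝ) : ℝ :=
  Real.negMulLog m + Real.negMulLog (1 - m) / 2 + m / 2 + J * m ^ 2 + (h - J) * m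

/-- The derivative of `rateFun` on `(0, 1)`. -/
noncomputable def rateDeriv (J h m : ℝ) : ℝ :=
  -Real.log m + Real.log (1 - m) / 2 + tauFun J h m

lemma log_levelWeight (J h : ℝ) (N j : ℕ) :
    Real.log (levelWeight J h N j) =
      Real.log N.factorial - Real.log (N % 2 + 2 * j).factorial
        - (N / 2 - j : ℕ) * Real.log 2 - Real.log (N / 2 - j).factorial
        + N * levelDensity N j / 2 * Real.log N
        + N * (J * levelDensity N j ^ 2 + (h - J) * levelDensity N j) := by
  have h2 : ((2 : ℝ) ^ (N / 2 - j)) ≠ 0 := by positivity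
  have hr : (((N % 2 + 2 * j).factorial : ℕ) : ℝ) ≠ 0 := by positivity
  have hn : (((N / 2 - j).factorial : ℕ) : ℝ) ≠ 0 := by positivity
  rw [levelWeight, Real.log_mul (dimerCount_pos N j).ne' (Real.exp_pos _).ne', Real.log_exp,
    dimerCount, Real.log_div (by positivity) (by positivity), Real.log_mul (by positivity) hn,
    Real.log_mul hr h2, Real.log_pow]
  unfold bIMD
  rw [levelDensity]
  ring

lemma two_mul_half_sub {N j : ℕ} (hN : 1 ≤ N) (hj : j ≤ N / 2) :
    2 * ((N / 2 - j : ℕ) : ℝ) = N * (1 - levelDensity N j) := by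
  have hN' : (N : ℝ) ≠ 0 := by positivity
  have h : 2 * (N / 2 - j) + (N % 2 + 2 * j) = N := by omega
  have h' : 2 * ((N / 2 - j : ℕ) : ℝ) + ((N % 2 + 2 * j : ℕ) : ℝ) = N := by exact_mod_cast h
  rw [levelDensity]
  field_simp
  linarith

lemma mul_levelDensity {N : ℕ} (hN : 1 ≤ N) (j : ℕ) :
    N * levelDensity N j = ((N % 2 + 2 * j : ℕ) : ℝ) := by
  have hN' : (N : ℝ) ≠ 0 := by positivity
  rw [levelDensity]; field_simp

lemma levelDensity_mem {N j : ℕ} (hN : 1 ≤ N) (hj : j ≤ N / 2) :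
    levelDensity N j ∈ Set.Icc (0 : ℝ) 1 := by
  have hN' : (0 : ℝ) < N := by positivity
  refine ⟨by unfold levelDensity; positivity, ?_⟩
  rw [levelDensity, div_le_one hN']
  exact_mod_cast (by omega : N % 2 + 2 * j ≤ N)

lemma levelDensity_succ (N j : ℕ) : levelDensity N (j + 1) = levelDensity N j + 2 / N := by
  unfold levelDensity
  push_cast
  ring

lemma log_levelWeight_succ_sub (J h : ℝ) {N j : ℕ} (hN : 1 ≤ N) (hj : j + 1 ≤ N / 2) :
    Real.log (levelWeight J h N (j + 1)) - Real.log (levelWeight J h N j) =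
      Real.log (1 - levelDensity N j) - Real.log (levelDensity N j + 1 / N)
        - Real.log (levelDensity N j + 2 / N) + 2 * tauFun J h (levelDensity N j) + 4 * J / N := by
  have hN' : (0 : ℝ) < N := by positivity
  have hm0 : 0 ≤ levelDensity N j := (levelDensity_mem hN (by omega)).1
  rw [log_levelWeight J h, log_levelWeight J h, levelDensity_succ]
  obtain ⟨n, hn⟩ : ∃ n, N / 2 - j = n + 1 := ⟨N / 2 - j - 1, by omega⟩
  have h2n := two_mul_half_sub hN (show j ≤ N / 2 by omega)
  have hr := mul_levelDensity hN j
  set m := levelDensity N j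
  set r := N % 2 + 2 * j with hrdef
  have hr2 : N % 2 + 2 * (j + 1) = (r + 1) + 1 := by omega
  have hn' : N / 2 - (j + 1) = n := by omega
  rw [hr2, hn', hn, Nat.factorial_succ (r + 1), Nat.factorial_succ r, Nat.factorial_succ n]
  rw [hn] at h2n
  push_cast at h2n ⊢
  have e1 : (1 : ℝ) - m = 2 * ((n : ℝ) + 1) / N := by field_simp; linarith
  have e2 : m + 1 / N = ((r : ℝ) + 1) / N := by field_simp; linarith
  have e3 : m + 2 / N = ((r : ℝ) + 1 + 1) / N := by field_simp; linarith
  have hr1 : (r : ℝ) + 1 ≠ 0 := by positivity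
  have hr2' : (r : ℝ) + 1 + 1 ≠ 0 := by positivity
  have hrf : ((r.factorial : ℕ) : ℝ) ≠ 0 := by positivity
  have hn1 : (n : ℝ) + 1 ≠ 0 := by positivity
  have hnf : ((n.factorial : ℕ) : ℝ) ≠ 0 := by positivity
  rw [e1, e2]
  rw [Real.log_div (mul_ne_zero two_ne_zero hn1) hN'.ne', Real.log_div hr1 hN'.ne',
    Real.log_mul two_ne_zero hn1, Real.log_mul hr2' (mul_ne_zero hr1 hrf),
    Real.log_mul hr1 hrf, Real.log_mul hn1 hnf]
  have e4 : Real.log (m + 2 / N) = Real.log ((r : ℝ) + 1 + 1) - Real.log N := by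
    rw [e3, Real.log_div hr2' hN'.ne']
  rw [e4, tauFun]
  field_simp
  ring

lemma mul_log_sub_le_log_factorial (n : ℕ) :
    n * Real.log n - n ≤ Real.log n.factorial := by
  rcases Nat.eq_zero_or_pos n with rfl | hn
  · simp
  have hn' : (0 : ℝ) < n := by positivity
  have := Real.pow_div_factorial_le_exp (n : ℝ) hn'.le n
  have h2 := Real.log_le_log (by positivity) this
  rw [Real.log_exp, Real.log_div (by positivity) (by positivity), Real.log_pow] at h2
  linarith

lemma log_factorial_le (n : ℕ) :
    Real.log n.factorial ≤ n * Real.log n - n + Real.log n + 1 := by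
  induction n with
  | zero => simp
  | succ n ih =>
    rcases Nat.eq_zero_or_pos n with rfl | hn
    · simp
    have hn' : (0 : ℝ) < n := by positivity
    rw [Nat.factorial_succ, Nat.cast_mul, Real.log_mul (by positivity) (by positivity)]
    have h1 := Real.one_sub_inv_le_log_of_pos (show (0 : ℝ) < ((n + 1 : ℕ) : ℝ) / n by positivity)
    rw [Real.log_div (by positivity) (by positivity)] at h1
    have h2 : (1 : ℝ) ≤ (n + 1) * (Real.log ((n + 1 : ℕ) : ℝ) - Real.log n) := by
      have : (1 : ℝ) = (n + 1) * (1 - (((n + 1 : ℕ) : ℝ) / n)⁻¹) := by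
        push_cast; field_simp; ring
      calc (1 : ℝ) = (n + 1) * (1 - (((n + 1 : ℕ) : ℝ) / n)⁻¹) := this
        _ ≤ _ := by gcongr
    push_cast at h2 ⊢
    nlinarith

lemma mul_rateFun_eq (J h : ℝ) {N j : ℕ} (hN : 1 ≤ N) (hj : j ≤ N / 2) :
    N * rateFun J h (levelDensity N j) - N / 2 * Real.log N + N / 2 =
      -(((N % 2 + 2 * j : ℕ) : ℝ) * Real.log ((N % 2 + 2 * j : ℕ) : ℝ)
          - ((N % 2 + 2 * j : ℕ) : ℝ))
        - (N / 2 - j : ℕ) * Real.log 2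
        - ((N / 2 - j : ℕ) * Real.log (N / 2 - j : ℕ) - (N / 2 - j : ℕ))
        + N * levelDensity N j / 2 * Real.log N
        + N * (J * levelDensity N j ^ 2 + (h - J) * levelDensity N j) := by
  have hN' : (0 : ℝ) < N := by positivity
  have hr := mul_levelDensity hN j
  have h2n := two_mul_half_sub hN hj
  obtain ⟨hm0, hm1⟩ := levelDensity_mem hN hj
  rw [← hr]
  generalize hnn : ((N / 2 - j : ℕ) : ℝ) = n at *
  set m := levelDensity N j
  have hn : n = N * (1 - m) / 2 := by linarith
  have e1 : m * Real.log (N * m) = m * Real.log N + m * Real.log m := by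
    rcases hm0.eq_or_lt with h0 | h0
    · rw [← h0]; simp
    · rw [Real.log_mul hN'.ne' h0.ne']; ring
  have e2 : (1 - m) * Real.log n =
      (1 - m) * (Real.log N + Real.log (1 - m) - Real.log 2) := by
    rcases hm1.eq_or_lt with h0 | h0
    · rw [h0]; simp
    · rw [hn, Real.log_div (by nlinarith) (by norm_num),
        Real.log_mul hN'.ne' (by linarith)]
  have e3 : n * Real.log n = N / 2 * ((1 - m) * Real.log n) := by rw [hn]; ring
  have e4 : N * m * Real.log (N * m) = N * (m * Real.log (N * m)) := by ring
  rw [e3, e4, e1, e2, hn, rateFun, Real.negMulLog, Real.negMulLog]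
  ring

lemma log_levelWeight_le (J h : ℝ) {N j : ℕ} (hN : 1 ≤ N) (hj : j ≤ N / 2) :
    Real.log (levelWeight J h N j) ≤ Real.log N.factorial +
      (N * rateFun J h (levelDensity N j) - N / 2 * Real.log N + N / 2) := by
  rw [mul_rateFun_eq J h hN hj, log_levelWeight J h]
  linarith [mul_log_sub_le_log_factorial (N % 2 + 2 * j),
    mul_log_sub_le_log_factorial (N / 2 - j)]

lemma le_log_levelWeight (J h : ℝ) {N j : ℕ} (hN : 1 ≤ N) (hj : j ≤ N / 2) :
    Real.log N.factorial +
      (N * rateFun J h (levelDensity N j) - N / 2 * Real.log N + N / 2)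
        - 2 * (Real.log N + 1) ≤ Real.log (levelWeight J h N j) := by
  have aux : ∀ n : ℕ, n ≤ N → Real.log n ≤ Real.log N := by
    intro n hn
    rcases Nat.eq_zero_or_pos n with rfl | h0
    · simpa using Real.log_natCast_nonneg N
    · exact Real.log_le_log (by positivity) (by exact_mod_cast hn)
  rw [mul_rateFun_eq J h hN hj, log_levelWeight J h]
  linarith [log_factorial_le (N % 2 + 2 * j), log_factorial_le (N / 2 - j),
    aux (N % 2 + 2 * j) (by omega), aux (N / 2 - j) (by omega)]

lemma gFun_spec (x : ℝ) :
    0 < gFun x ∧ gFun x < 1 ∧ gFun x ^ 2 = (1 - gFun x) * Real.exp (2 * x) := by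
  have hE : 0 < Real.exp (2 * x) := Real.exp_pos _
  have h4 : Real.exp (4 * x) = Real.exp (2 * x) ^ 2 := by rw [← Real.exp_nat_mul]; ring_nf
  unfold gFun
  rw [h4]
  set E := Real.exp (2 * x)
  have hs := Real.sq_sqrt (show 0 ≤ E ^ 2 + 4 * E by positivity)
  have hs0 := Real.sqrt_nonneg (E ^ 2 + 4 * E)
  set s := Real.sqrt (E ^ 2 + 4 * E)
  refine ⟨?_, ?_, ?_⟩
  · have : E < s := by nlinarith
    linarith
  · have : s < E + 2 := by nlinarith
    linarith
  · nlinarith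

lemma eq_gFun_of_sq_eq {m x : ℝ} (hm : 0 ≤ m) (h : m ^ 2 = (1 - m) * Real.exp (2 * x)) :
    m = gFun x := by
  obtain ⟨h0, _, hg⟩ := gFun_spec x
  have hE : 0 < Real.exp (2 * x) := Real.exp_pos _
  have h1 : (m - gFun x) * (m + gFun x + Real.exp (2 * x)) = 0 := by linarith
  rcases mul_eq_zero.mp h1 with h2 | h2 <;> linarith

lemma sub_le_mul_log_sub {a b : ℝ} (ha : 0 ≤ a) (hb : 0 < b) :
    a - b ≤ a * (Real.log a - Real.log b) := by
  rcases ha.eq_or_lt with rfl | ha'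
  · simp [hb.le]
  · have := Real.one_sub_inv_le_log_of_pos (div_pos ha' hb)
    rw [Real.log_div ha'.ne' hb.ne'] at this
    have h2 : a - b = a * (1 - (a / b)⁻¹) := by field_simp
    rw [h2]
    gcongr

lemma ptilde_add_half (J h m : ℝ) : ptilde J h m + 1 / 2 =
    -J * m ^ 2 + gFun (tauFun J h m) / 2 - Real.log (1 - gFun (tauFun J h m)) / 2 := by
  unfold ptilde; ring

lemma tau_eq_log_gFun (x : ℝ) : x = Real.log (gFun x) - Real.log (1 - gFun x) / 2 := by
  obtain ⟨h0, h1, hg⟩ := gFun_spec x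
  have := congrArg Real.log hg
  rw [Real.log_pow, Real.log_mul (by linarith) (Real.exp_pos _).ne', Real.log_exp] at this
  push_cast at this
  linarith

lemma rateFun_eq (J h m : ℝ) : rateFun J h m =
    -(m * Real.log m) - (1 - m) * Real.log (1 - m) / 2 + m / 2 + m * tauFun J h m - J * m ^ 2 := by
  unfold rateFun tauFun Real.negMulLog; ring

lemma rateFun_le_ptilde (J h : ℝ) {m : ℝ} (hm : m ∈ Set.Icc (0 : ℝ) 1) :
    rateFun J h m ≤ ptilde J h m + 1 / 2 := by
  rw [ptilde_add_half, rateFun_eq]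
  have hx := tau_eq_log_gFun (tauFun J h m)
  obtain ⟨h0, h1, _⟩ := gFun_spec (tauFun J h m)
  generalize gFun (tauFun J h m) = g at *
  have e1 := sub_le_mul_log_sub hm.1 h0
  have e2 := sub_le_mul_log_sub (sub_nonneg.mpr hm.2) (sub_pos.mpr h1)
  rw [hx]
  linarith

lemma rateFun_eq_ptilde (J h : ℝ) {m : ℝ} (hm : m = gFun (tauFun J h m)) :
    rateFun J h m = ptilde J h m + 1 / 2 := by
  rw [ptilde_add_half, rateFun_eq]
  have hx := tau_eq_log_gFun (tauFun J h m)
  rw [← hm] at hx ⊢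
  rw [hx]
  ring

lemma continuous_rateFun (J h : ℝ) : Continuous (rateFun J h) := by
  unfold rateFun
  have := Real.continuous_negMulLog
  fun_prop

lemma exists_rateFun_gap (J h : ℝ) {m₀ : ℝ}
    (hmax : ∀ m ∈ Set.Icc (0:ℝ) 1, ptilde J h m ≤ ptilde J h m₀)
    (huniq : ∀ m ∈ Set.Icc (0:ℝ) 1, ptilde J h m = ptilde J h m₀ → m = m₀)
    (hg : m₀ = gFun (tauFun J h m₀)) {δ : ℝ} (hδ : 0 < δ) :
    ∃ η > 0, ∀ m ∈ Set.Icc (0:ℝ) 1, δ ≤ |m - m₀| → rateFun J h m ≤ rateFun J h m₀ - η := by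
  have hlt : ∀ m ∈ Set.Icc (0:ℝ) 1, m ≠ m₀ → rateFun J h m < rateFun J h m₀ := by
    intro m hm hne
    have h1 := rateFun_le_ptilde J h hm
    have h2 := rateFun_eq_ptilde J h hg
    have h3 := lt_of_le_of_ne (hmax m hm) fun h => hne (huniq m hm h)
    linarith
  have hK : IsCompact (Set.Icc (0:ℝ) 1 ∩ {m | δ ≤ |m - m₀|}) :=
    isCompact_Icc.inter_right (isClosed_le continuous_const (by fun_prop))
  rcases (Set.Icc (0:ℝ) 1 ∩ {m | δ ≤ |m - m₀|}).eq_empty_or_nonempty with he | hne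
  · refine ⟨1, one_pos, fun m hm hd => ?_⟩
    exact absurd (show m ∈ (∅ : Set ℝ) from he ▸ ⟨hm, hd⟩) (Set.notMem_empty m)
  · obtain ⟨x, ⟨hx, hxd⟩, hxm⟩ := hK.exists_isMaxOn hne (continuous_rateFun J h).continuousOn
    have hx0 : x ≠ m₀ := by
      rintro rfl
      simp at hxd
      linarith
    refine ⟨rateFun J h m₀ - rateFun J h x, sub_pos.mpr (hlt x hx hx0), fun m hm hd => ?_⟩
    have : rateFun J h m ≤ rateFun J h x := hxm ⟨hm, hd⟩
    linarith

lemma hasDerivAt_Lone_one (J h : ℝ) :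
    HasDerivAt (Lone J h) (-2 / Real.exp (2 * tauFun J h 1)) 1 := by
  have hE : 0 < Real.exp (2 * tauFun J h 1) := Real.exp_pos _
  have hB : DifferentiableAt ℝ (fun m => (m^2 - (1-m)*Real.exp (2 * tauFun J h m)) /
      ((1-m) + Real.exp (2 * tauFun J h m))) 1 := by
    refine DifferentiableAt.div ?_ ?_ (by simp)
    · unfold tauFun; fun_prop
    · unfold tauFun; fun_prop
  have h1 : HasDerivAt (fun m : ℝ => 2 * (1 - m)) (-2) 1 := by
    simpa using ((hasDerivAt_id (1 : ℝ)).const_sub 1).const_mul 2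
  have h2 := h1.mul hB.hasDerivAt
  refine (h2.congr_deriv ?_).congr_of_eventuallyEq (Filter.Eventually.of_forall fun m => ?_)
  · simp [div_eq_mul_inv]
  · simp only [Lone, Pi.mul_apply]; ring

lemma critical_point_of_Lone (J h : ℝ) {m₀ : ℝ} (hm₀ : m₀ ∈ Set.Icc (0:ℝ) 1)
    (hzero : Lone J h m₀ = 0) (hderiv : 0 ≤ deriv (Lone J h) m₀) :
    0 < m₀ ∧ m₀ < 1 ∧ m₀ ^ 2 = (1 - m₀) * Real.exp (2 * tauFun J h m₀) := by
  have hE : 0 < Real.exp (2 * tauFun J h m₀) := Real.exp_pos _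
  have h1 : m₀ ≠ 1 := by
    rintro rfl
    rw [(hasDerivAt_Lone_one J h).deriv] at hderiv
    have : -2 / Real.exp (2 * tauFun J h 1) < 0 := div_neg_of_neg_of_pos (by norm_num) hE
    linarith
  have h1' : m₀ < 1 := lt_of_le_of_ne hm₀.2 h1
  have hd : 0 < (1 - m₀) + Real.exp (2 * tauFun J h m₀) := by linarith
  have hsq : m₀ ^ 2 = (1 - m₀) * Real.exp (2 * tauFun J h m₀) := by
    unfold Lone at hzero
    rw [div_eq_zero_iff, or_iff_left hd.ne', mul_eq_zero] at hzero
    rcases hzero with h2 | h2 <;> linarith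
  refine ⟨lt_of_le_of_ne hm₀.1 ?_, h1', hsq⟩
  rintro rfl
  norm_num at hsq
  linarith

open Asymptotics Filter Topology in
/-- Taylor expansion of an analytic function whose derivatives of order `< q` vanish. -/
lemma isBigO_sub_leading_term {f : ℝ → ℝ} {x : ℝ} (hf : AnalyticAt ℝ f x) (q : ℕ)
    (h0 : ∀ l < q, iteratedDeriv l f x = 0) :
    (fun y => f y - iteratedDeriv q f x / q.factorial * (y - x) ^ q) =O[𝓝 x]
      fun y => (y - x) ^ (q + 1) := by
  have h1 := hf.hasFPowerSeriesAt.isBigO_sub_partialSum_pow (q + 1)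
  have h2 : Tendsto (fun y => y - x) (𝓝 x) (𝓝 0) := by
    have : ContinuousAt (fun y : ℝ => y - x) x := by fun_prop
    simpa [ContinuousAt] using this
  have h3 := h1.comp_tendsto h2
  refine IsBigO.trans (h3.congr_left fun y => ?_) (IsBigO.of_norm_right ?_)
  · simp only [Function.comp_apply, add_sub_cancel, FormalMultilinearSeries.partialSum]
    rw [Finset.sum_range_succ, Finset.sum_eq_zero]
    · simp [mul_comm]
    · intro l hl
      rw [Finset.mem_range] at hl
      simp [h0 l hl]
  · refine (isBigO_refl _ _).congr_left fun y => ?_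
    simp

lemma analyticAt_Lone (J h : ℝ) {m : ℝ} (hm : m < 1) : AnalyticAt ℝ (Lone J h) m := by
  have hE : 0 < Real.exp (2 * tauFun J h m) := Real.exp_pos _
  have hden : (1 - m) + Real.exp (2 * tauFun J h m) ≠ 0 := by linarith
  unfold Lone tauFun at *
  refine AnalyticAt.div ?_ ?_ hden <;> fun_prop

/-- The positive factor in `Lone = cofactor * (1 - exp (2 * rateDeriv))`. -/
noncomputable def LoneCofactor (J h m : ℝ) : ℝ :=
  2 * (1 - m) * m ^ 2 / ((1 - m) + Real.exp (2 * tauFun J h m))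

lemma LoneCofactor_pos (J h : ℝ) {m : ℝ} (h0 : 0 < m) (h1 : m < 1) : 0 < LoneCofactor J h m := by
  have hE : 0 < Real.exp (2 * tauFun J h m) := Real.exp_pos _
  have : 0 < 1 - m := by linarith
  unfold LoneCofactor
  positivity

lemma rateDeriv_eq_log (J h : ℝ) {m : ℝ} (h0 : 0 < m) (h1 : m < 1) :
    rateDeriv J h m = Real.log (1 - Lone J h m / LoneCofactor J h m) / 2 := by
  have hE : 0 < Real.exp (2 * tauFun J h m) := Real.exp_pos _
  have h1' : 0 < 1 - m := by linarith
  have hd : (1 - m) + Real.exp (2 * tauFun J h m) ≠ 0 := by linarith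
  have : 1 - Lone J h m / LoneCofactor J h m =
      (1 - m) * Real.exp (2 * tauFun J h m) / m ^ 2 := by
    unfold Lone LoneCofactor
    field_simp
    ring
  rw [this, Real.log_div (by positivity) (by positivity), Real.log_mul h1'.ne' hE.ne',
    Real.log_exp, Real.log_pow, rateDeriv]
  push_cast
  ring

open Asymptotics Filter Topology in
lemma log_one_sub_add_isBigO : (fun x : ℝ => Real.log (1 - x) + x) =O[𝓝 0] fun x => x ^ 2 := by
  have hf : AnalyticAt ℝ (fun x : ℝ => Real.log (1 - x) + x) 0 := by
    refine AnalyticAt.add (AnalyticAt.log (by fun_prop) (by norm_num)) (by fun_prop)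
  have hder : HasDerivAt (fun x : ℝ => Real.log (1 - x) + x) 0 0 := by
    have h1 : HasDerivAt (fun x : ℝ => 1 - x) (-1) 0 := by
      simpa using (hasDerivAt_id (0 : ℝ)).const_sub 1
    have := (h1.log (by norm_num)).add (hasDerivAt_id (0 : ℝ))
    refine this.congr_deriv ?_
    norm_num
  have := isBigO_sub_leading_term hf 1 (fun l hl => by
    obtain rfl : l = 0 := by omega
    simp)
  simpa [iteratedDeriv_one, hder.deriv] using this

open Asymptotics Filter Topology in
lemma rateDeriv_isBigO (J h : ℝ) {m₀ : ℝ} (h0 : 0 < m₀) (h1 : m₀ < 1) (q : ℕ) (hq : 1 ≤ q)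
    (hder0 : ∀ l < q, iteratedDeriv l (Lone J h) m₀ = 0) :
    (fun m => rateDeriv J h m + iteratedDeriv q (Lone J h) m₀ /
        (2 * q.factorial * LoneCofactor J h m₀) * (m - m₀) ^ q) =O[𝓝 m₀]
      fun m => (m - m₀) ^ (q + 1) := by
  set c := iteratedDeriv q (Lone J h) m₀ / q.factorial
  set A := LoneCofactor J h
  have hA0 : A m₀ ≠ 0 := (LoneCofactor_pos J h h0 h1).ne'
  have hE : 0 < Real.exp (2 * tauFun J h m₀) := Real.exp_pos _
  have hAd : DifferentiableAt ℝ A m₀ := by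
    have hden : (1 - m₀) + Real.exp (2 * tauFun J h m₀) ≠ 0 := by linarith
    simp only [A]
    unfold LoneCofactor tauFun at *
    refine DifferentiableAt.div ?_ ?_ hden <;> fun_prop
  have hinv : (fun m => (A m)⁻¹ - (A m₀)⁻¹) =O[𝓝 m₀] fun m => m - m₀ :=
    (hAd.inv hA0).isBigO_sub
  have hL := isBigO_sub_leading_term (analyticAt_Lone J h h1) q hder0
  have hpow : (fun m : ℝ => (m - m₀) ^ (q + 1)) =O[𝓝 m₀] fun m => (m - m₀) ^ q := by
    have hb : (fun m : ℝ => m - m₀) =O[𝓝 m₀] fun _ => (1 : ℝ) :=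
      (show ContinuousAt (fun m : ℝ => m - m₀) m₀ by fun_prop).tendsto.isBigO_one ℝ
    simpa [pow_succ] using (isBigO_refl (fun m : ℝ => (m - m₀) ^ q) (𝓝 m₀)).mul hb
  have hL' : Lone J h =O[𝓝 m₀] fun m => (m - m₀) ^ q := by
    have := (hL.trans hpow).add (isBigO_const_mul_self c (fun m => (m - m₀) ^ q) (𝓝 m₀))
    refine this.congr_left fun m => ?_
    ring
  have hinvb : (fun m => (A m)⁻¹) =O[𝓝 m₀] fun _ => (1 : ℝ) :=
    (hAd.continuousAt.inv₀ hA0).tendsto.isBigO_one ℝ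
  have hT : (fun m => Lone J h m / A m - c / A m₀ * (m - m₀) ^ q) =O[𝓝 m₀]
      fun m => (m - m₀) ^ (q + 1) := by
    have e1 : (fun m => Lone J h m * ((A m)⁻¹ - (A m₀)⁻¹)) =O[𝓝 m₀]
        fun m => (m - m₀) ^ (q + 1) := by
      simpa [pow_succ] using hL'.mul hinv
    have e2 := hL.const_mul_left (A m₀)⁻¹
    refine (e1.add e2).congr_left fun m => ?_
    simp only [c]
    ring
  have hTb : (fun m => Lone J h m / A m) =O[𝓝 m₀] fun m => (m - m₀) ^ q := by
    simpa [div_eq_mul_inv] using hL'.mul hinvb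
  have hT0 : Tendsto (fun m => Lone J h m / A m) (𝓝 m₀) (𝓝 0) := by
    refine hTb.trans_tendsto ?_
    have : ContinuousAt (fun m : ℝ => (m - m₀) ^ q) m₀ := by fun_prop
    simpa [ContinuousAt, show q ≠ 0 by omega] using this
  have hlog : (fun m => Real.log (1 - Lone J h m / A m) + Lone J h m / A m) =O[𝓝 m₀]
      fun m => (m - m₀) ^ (q + 1) := by
    refine (log_one_sub_add_isBigO.comp_tendsto hT0).trans ?_
    refine (hTb.pow 2).trans ?_
    have e3 : (fun m : ℝ => (m - m₀) ^ q) =O[𝓝 m₀] fun m => (m - m₀) := by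
      have hb : (fun m : ℝ => (m - m₀) ^ (q - 1)) =O[𝓝 m₀] fun _ => (1 : ℝ) :=
        (show ContinuousAt (fun m : ℝ => (m - m₀) ^ (q - 1)) m₀ by
          fun_prop).tendsto.isBigO_one ℝ
      refine (hb.mul (isBigO_refl (fun m : ℝ => (m - m₀)) (𝓝 m₀))).congr (fun m => ?_)
        fun m => by ring
      rw [← pow_succ]; congr 1; omega
    refine ((isBigO_refl (fun m : ℝ => (m - m₀) ^ q) (𝓝 m₀)).mul e3).congr (fun m => ?_)
        fun m => by ring
    ring
  have hfin := (hlog.sub hT).const_mul_left (1 / 2)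
  refine hfin.congr' ?_ EventuallyEq.rfl
  filter_upwards [Ioo_mem_nhds h0 h1] with m hm
  rw [rateDeriv_eq_log J h hm.1 hm.2]
  simp only [c, A]
  field_simp
  ring

lemma abs_le_pow_add_one {p : ℕ} (hp : Even p) (hp0 : p ≠ 0) (x : ℝ) : |x| ≤ x ^ p + 1 := by
  rw [← hp.pow_abs]
  rcases le_total |x| 1 with h | h
  · have : 0 ≤ |x| ^ p := by positivity
    linarith
  · have := le_self_pow₀ h hp0
    linarith

lemma exists_pow_mul_exp_neg_le {p : ℕ} (hp : Even p) (hp0 : p ≠ 0) {c : ℝ} (hc : 0 < c) (n : ℕ) :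
    ∃ C > 0, ∀ x : ℝ, (|x| + 2) ^ n * Real.exp (-(c * x ^ p)) ≤ C := by
  refine ⟨n.factorial / c ^ n * Real.exp (3 * c), by positivity, fun x => ?_⟩
  have h1 := Real.pow_div_factorial_le_exp (c * (|x| + 2)) (by positivity) n
  have h2 : (|x| + 2) ^ n ≤ n.factorial / c ^ n * Real.exp (c * (|x| + 2)) := by
    rw [div_le_iff₀ (by positivity), mul_pow] at h1
    rw [div_mul_eq_mul_div, le_div_iff₀ (by positivity)]
    linarith
  calc (|x| + 2) ^ n * Real.exp (-(c * x ^ p))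
      ≤ n.factorial / c ^ n * Real.exp (c * (|x| + 2)) * Real.exp (-(c * x ^ p)) := by gcongr
    _ = n.factorial / c ^ n * Real.exp (c * (|x| + 2) + -(c * x ^ p)) := by
        rw [Real.exp_add]; ring
    _ ≤ _ := by
        gcongr
        have := abs_le_pow_add_one hp hp0 x
        nlinarith

lemma one_add_sq_le (x : ℝ) : 1 + x ^ 2 ≤ (|x| + 2) ^ 2 := by
  rw [← sq_abs x]
  nlinarith [abs_nonneg x]

lemma exists_exp_neg_le_inv {p : ℕ} (hp : Even p) (hp0 : p ≠ 0) {d : ℝ} (hd : 0 < d) :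
    ∃ C > 0, ∀ x : ℝ, (|x| + 2) * Real.exp (-(d * x ^ p)) ≤ C * (1 + x ^ 2)⁻¹ := by
  obtain ⟨C, hC, h⟩ := exists_pow_mul_exp_neg_le hp hp0 hd 3
  refine ⟨C, hC, fun x => ?_⟩
  rw [← div_eq_mul_inv, le_div_iff₀ (by positivity)]
  refine le_trans ?_ (h x)
  have := one_add_sq_le x
  calc (|x| + 2) * Real.exp (-(d * x ^ p)) * (1 + x ^ 2)
      ≤ (|x| + 2) * Real.exp (-(d * x ^ p)) * (|x| + 2) ^ 2 := by gcongr
    _ = _ := by ring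

lemma one_add_sq_le_of_abs_sub_le {s t : ℝ} (h : |s - t| ≤ 2) :
    1 + t ^ 2 ≤ 2 * (|s| + 2) ^ 2 := by
  have h1 : |t| ≤ |s| + 2 := by
    have := abs_sub_abs_le_abs_sub t s
    rw [abs_sub_comm] at this
    linarith
  rw [← sq_abs t]
  nlinarith [abs_nonneg s, abs_nonneg t]

lemma exists_exp_neg_lipschitz {p : ℕ} (hp : Even p) (hp0 : p ≠ 0) {d : ℝ} (hd : 0 < d) :
    ∃ C > 0, ∀ s t : ℝ, |s - t| ≤ 2 →
      |Real.exp (-(d * s ^ p)) - Real.exp (-(d * t ^ p))| ≤ C * |s - t| * (1 + t ^ 2)⁻¹ := by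
  obtain ⟨C, hC, h⟩ := exists_pow_mul_exp_neg_le hp hp0 hd (p + 1)
  refine ⟨d * p * 2 * C, by positivity, fun s t hst => ?_⟩
  have hder : ∀ x : ℝ, HasDerivAt (fun x => Real.exp (-(d * x ^ p)))
      (Real.exp (-(d * x ^ p)) * -(d * (p * x ^ (p - 1)))) x := fun x =>
    (((hasDerivAt_pow p x).const_mul d).neg).exp
  have hbound : ∀ x ∈ Set.uIcc t s, ‖Real.exp (-(d * x ^ p)) * -(d * (p * x ^ (p - 1)))‖ ≤
      d * p * 2 * C * (1 + t ^ 2)⁻¹ := by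
    intro x hx
    have hxt : |x - t| ≤ 2 := (Set.abs_sub_left_of_mem_uIcc hx).trans hst
    have h1 := one_add_sq_le_of_abs_sub_le hxt
    rw [← div_eq_mul_inv, le_div_iff₀ (by positivity), norm_mul, norm_neg, norm_mul, norm_mul,
      norm_pow, Real.norm_eq_abs, Real.norm_eq_abs, Real.norm_eq_abs, Real.norm_eq_abs,
      abs_of_pos (Real.exp_pos _), abs_of_pos hd, abs_of_nonneg (Nat.cast_nonneg p)]
    have h2 : |x| ^ (p - 1) ≤ (|x| + 2) ^ (p - 1) := by gcongr; linarith
    calc Real.exp (-(d * x ^ p)) * (d * (p * |x| ^ (p - 1))) * (1 + t ^ 2)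
        ≤ Real.exp (-(d * x ^ p)) * (d * (p * (|x| + 2) ^ (p - 1))) * (2 * (|x| + 2) ^ 2) := by
          gcongr
      _ = d * p * 2 * ((|x| + 2) ^ (p - 1 + 2) * Real.exp (-(d * x ^ p))) := by ring
      _ ≤ d * p * 2 * C := by
          have h3 := h x
          rw [show p - 1 + 2 = p + 1 by omega]
          gcongr
  have := (convex_uIcc t s).norm_image_sub_le_of_norm_hasDerivWithin_le
    (fun x _ => (hder x).hasDerivWithinAt) hbound Set.left_mem_uIcc Set.right_mem_uIcc
  rw [Real.norm_eq_abs, Real.norm_eq_abs] at this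
  linarith

lemma integrable_exp_neg_pow {p : ℕ} (hp : Even p) (hp0 : p ≠ 0) {d : ℝ} (hd : 0 < d) :
    Integrable (fun t : ℝ => Real.exp (-(d * t ^ p))) := by
  obtain ⟨C, hC, h⟩ := exists_exp_neg_le_inv hp hp0 hd
  refine Integrable.mono' (integrable_inv_one_add_sq.const_mul C)
    (by fun_prop) (Filter.Eventually.of_forall fun t => ?_)
  rw [Real.norm_eq_abs, abs_of_pos (Real.exp_pos _)]
  refine le_trans ?_ (h t)
  have := abs_nonneg t
  nlinarith [Real.exp_pos (-(d * t ^ p))]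

/-- The unnormalized distribution function of the density `exp (-d t ^ p)`. -/
noncomputable def expCDF (d : ℝ) (p : ℕ) (z : ℝ) : ℝ :=
  ∫ t in Set.Iic z, Real.exp (-(d * t ^ p))

lemma expCDF_sub {p : ℕ} (hp : Even p) (hp0 : p ≠ 0) {d : ℝ} (hd : 0 < d) (a b : ℝ) :
    expCDF d p b - expCDF d p a = ∫ t in a..b, Real.exp (-(d * t ^ p)) :=
  intervalIntegral.integral_Iic_sub_Iic (integrable_exp_neg_pow hp hp0 hd).integrableOn
    (integrable_exp_neg_pow hp hp0 hd).integrableOn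

lemma expCDF_mono {p : ℕ} (hp : Even p) (hp0 : p ≠ 0) {d : ℝ} (hd : 0 < d) :
    Monotone (expCDF d p) := by
  intro a b hab
  have h := expCDF_sub hp hp0 hd a b
  have : 0 ≤ ∫ t in a..b, Real.exp (-(d * t ^ p)) :=
    intervalIntegral.integral_nonneg hab fun t _ => (Real.exp_pos _).le
  linarith

lemma expCDF_sub_le {p : ℕ} (hp : Even p) (hp0 : p ≠ 0) {d : ℝ} (hd : 0 < d) {a b : ℝ}
    (hab : a ≤ b) : expCDF d p b - expCDF d p a ≤ b - a := by
  rw [expCDF_sub hp hp0 hd]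
  have hc : Continuous fun t : ℝ => Real.exp (-(d * t ^ p)) := by fun_prop
  have h : (∫ t in a..b, Real.exp (-(d * t ^ p))) ≤ ∫ _t in a..b, (1 : ℝ) := by
    refine intervalIntegral.integral_mono_on hab (hc.intervalIntegrable _ _) (by simp)
      fun t _ => ?_
    rw [Real.exp_le_one_iff]
    have := hp.pow_nonneg t
    nlinarith
  simpa using h

lemma expCDF_nonneg (d : ℝ) (p : ℕ) (z : ℝ) : 0 ≤ expCDF d p z :=
  integral_nonneg fun _ => (Real.exp_pos _).le

lemma expCDF_le_integral {p : ℕ} (hp : Even p) (hp0 : p ≠ 0) {d : ℝ} (hd : 0 < d) (z : ℝ) :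
    expCDF d p z ≤ ∫ t : ℝ, Real.exp (-(d * t ^ p)) :=
  setIntegral_le_integral (integrable_exp_neg_pow hp hp0 hd)
    (Filter.Eventually.of_forall fun _ => (Real.exp_pos _).le)

lemma integral_sub_expCDF {p : ℕ} (hp : Even p) (hp0 : p ≠ 0) {d : ℝ} (hd : 0 < d) (z : ℝ) :
    (∫ t : ℝ, Real.exp (-(d * t ^ p))) - expCDF d p z =
      ∫ t in Set.Ioi z, Real.exp (-(d * t ^ p)) := by
  have := intervalIntegral.integral_Iic_add_Ioi (b := z) (f := fun t => Real.exp (-(d * t ^ p)))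
    (μ := volume) (integrable_exp_neg_pow hp hp0 hd).integrableOn
    (integrable_exp_neg_pow hp hp0 hd).integrableOn
  unfold expCDF
  linarith

lemma exists_expCDF_tail {p : ℕ} (hp : Even p) (hp0 : p ≠ 0) {d : ℝ} (hd : 0 < d) :
    ∃ C > 0, ∀ T > 0, expCDF d p (-T) ≤ C / T ∧
      (∫ t : ℝ, Real.exp (-(d * t ^ p))) - expCDF d p T ≤ C / T := by
  obtain ⟨C, hC, h⟩ := exists_exp_neg_le_inv hp hp0 hd
  have key : ∀ T > 0, ∀ s : Set ℝ, MeasurableSet s → (∀ t ∈ s, T ≤ |t|) →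
      ∫ t in s, Real.exp (-(d * t ^ p)) ≤ C * π / T := by
    intro T hT s hs hst
    calc ∫ t in s, Real.exp (-(d * t ^ p)) ≤ ∫ t in s, C / T * (1 + t ^ 2)⁻¹ := by
          refine setIntegral_mono_on (integrable_exp_neg_pow hp hp0 hd).integrableOn
            (integrable_inv_one_add_sq.const_mul _).integrableOn hs fun t ht => ?_
          have h1 := h t
          have h2 : T * Real.exp (-(d * t ^ p)) ≤ (|t| + 2) * Real.exp (-(d * t ^ p)) := by
            have := hst t ht
            gcongr
            linarith
          rw [div_mul_eq_mul_div, le_div_iff₀ hT]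
          linarith
      _ ≤ ∫ t : ℝ, C / T * (1 + t ^ 2)⁻¹ :=
          setIntegral_le_integral (integrable_inv_one_add_sq.const_mul _)
            (Filter.Eventually.of_forall fun t => by positivity)
      _ = C * π / T := by
          rw [integral_const_mul, integral_univ_inv_one_add_sq]; ring
  refine ⟨C * π, by positivity, fun T hT => ⟨?_, ?_⟩⟩
  · refine key T hT _ measurableSet_Iic fun t ht => ?_
    rw [Set.mem_Iic] at ht
    rw [abs_of_neg (by linarith)]
    linarith
  · rw [integral_sub_expCDF hp hp0 hd]
    refine key T hT _ measurableSet_Ioi fun t ht => ?_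
    rw [Set.mem_Ioi] at ht
    rw [abs_of_pos (by linarith)]
    exact ht.le

lemma exists_riemann_sum_error {p : ℕ} (hp : Even p) (hp0 : p ≠ 0) {d : ℝ} (hd : 0 < d)
    {C : ℝ} (hC : 0 < C) :
    ∃ C' > 0, ∀ (ε Δ x₀ : ℝ) (n : ℕ) (a : ℕ → ℝ), 0 < ε → 0 < Δ → Δ ≤ 2 * ε → Δ ≤ 2 →
      (∀ j < n, |a j - Real.exp (-(d * (x₀ + j * Δ) ^ p))| ≤
        C * ε * (1 + (x₀ + j * Δ) ^ 2)⁻¹) →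
      |Δ * ∑ j ∈ Finset.range n, a j - (expCDF d p (x₀ + n * Δ) - expCDF d p x₀)| ≤ C' * ε := by
  obtain ⟨C₁, hC₁, hLip⟩ := exists_exp_neg_lipschitz hp hp0 hd
  set B := 9 * C + 2 * C₁ with hB
  have hBpos : 0 < B := by positivity
  refine ⟨B * π, by positivity, fun ε Δ x₀ n a hε hΔ hΔε hΔ2 ha => ?_⟩
  set x : ℕ → ℝ := fun j => x₀ + j * Δ with hx
  have hcont : Continuous fun t : ℝ => Real.exp (-(d * t ^ p)) := by fun_prop
  have hcont' : Continuous fun t : ℝ => (1 + t ^ 2)⁻¹ :=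
    Continuous.inv₀ (by fun_prop) fun t => by positivity
  have hxs : ∀ j, x (j + 1) = x j + Δ := by intro j; simp only [hx]; push_cast; ring
  have hcell : ∀ j < n, |Δ * a j - ∫ t in x j..x (j + 1), Real.exp (-(d * t ^ p))| ≤
      B * ε * ∫ t in x j..x (j + 1), (1 + t ^ 2)⁻¹ := by
    intro j hj
    have h1 : Δ * a j - ∫ t in x j..x (j + 1), Real.exp (-(d * t ^ p)) =
        ∫ t in x j..x (j + 1), (a j - Real.exp (-(d * t ^ p))) := by
      rw [intervalIntegral.integral_sub (by simp) (hcont.intervalIntegrable _ _),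
        intervalIntegral.integral_const, hxs]
      simp
    rw [h1, ← intervalIntegral.integral_const_mul, ← Real.norm_eq_abs]
    refine intervalIntegral.norm_integral_le_of_norm_le (by rw [hxs]; linarith)
      (Filter.Eventually.of_forall fun t ht => ?_)
      ((hcont'.const_mul _ |>.intervalIntegrable _ _))
    rw [hxs] at ht
    have hst : |x j - t| ≤ Δ := by
      rw [abs_le]; constructor <;> linarith [ht.1, ht.2]
    have e1 := ha j hj
    have e2 := hLip (x j) t (hst.trans hΔ2)
    have e3 : (1 + (x j) ^ 2)⁻¹ ≤ 9 * (1 + t ^ 2)⁻¹ := by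
      rw [← div_eq_mul_inv, inv_le_comm₀ (by positivity) (by positivity), inv_div,
        div_le_iff₀ (by norm_num)]
      have h3 : t - x j ≤ 2 := by linarith [ht.2]
      have h4 : 0 ≤ t - x j := by linarith [ht.1]
      nlinarith [sq_nonneg (2 * x j - (t - x j)), sq_nonneg (x j)]
    rw [Real.norm_eq_abs]
    calc |a j - Real.exp (-(d * t ^ p))|
        ≤ |a j - Real.exp (-(d * (x j) ^ p))| +
          |Real.exp (-(d * (x j) ^ p)) - Real.exp (-(d * t ^ p))| := abs_sub_le _ _ _
      _ ≤ C * ε * (9 * (1 + t ^ 2)⁻¹) + C₁ * (2 * ε) * (1 + t ^ 2)⁻¹ := by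
          refine add_le_add (e1.trans ?_) (e2.trans ?_)
          · gcongr
          · gcongr
            exact hst.trans hΔε
      _ = B * ε * (1 + t ^ 2)⁻¹ := by rw [hB]; ring
  have hsum1 := intervalIntegral.sum_integral_adjacent_intervals (μ := volume) (a := x) (n := n)
    (fun j _ => hcont.intervalIntegrable (x j) (x (j + 1)))
  have hsum2 := intervalIntegral.sum_integral_adjacent_intervals (μ := volume) (a := x) (n := n)
    (fun j _ => hcont'.intervalIntegrable (x j) (x (j + 1)))
  have hx0 : x 0 = x₀ := by simp [hx]
  rw [expCDF_sub hp hp0 hd, ← hx0, show x 0 + n * Δ = x n by rw [hx0], ← hsum1, Finset.mul_sum,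
    ← Finset.sum_sub_distrib]
  calc |∑ j ∈ Finset.range n, (Δ * a j - ∫ t in x j..x (j + 1), Real.exp (-(d * t ^ p)))|
      ≤ ∑ j ∈ Finset.range n, |Δ * a j - ∫ t in x j..x (j + 1), Real.exp (-(d * t ^ p))| :=
        Finset.abs_sum_le_sum_abs _ _
    _ ≤ ∑ j ∈ Finset.range n, B * ε * ∫ t in x j..x (j + 1), (1 + t ^ 2)⁻¹ :=
        Finset.sum_le_sum fun j hj => hcell j (Finset.mem_range.mp hj)
    _ = B * ε * ∫ t in x 0..x n, (1 + t ^ 2)⁻¹ := by rw [← Finset.mul_sum, hsum2]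
    _ ≤ B * ε * π := by
        gcongr
        rw [intervalIntegral.integral_of_le (by
          rw [hx0]; simp only [hx]; nlinarith [Nat.cast_nonneg (α := ℝ) n]),
          ← integral_univ_inv_one_add_sq]
        exact setIntegral_le_integral integrable_inv_one_add_sq
          (Filter.Eventually.of_forall fun t => by positivity)
    _ = B * π * ε := by ring

lemma exists_initial_segment {x : ℕ → ℝ} (hx : Monotone x) (L : ℕ) (z : ℝ) :
    ∃ n ≤ L + 1, (∀ j ≤ L, x j ≤ z ↔ j < n) := by
  by_cases h : ∃ j, z < x j ∧ j ≤ L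
  · classical
    refine ⟨Nat.find h, (Nat.find_spec h).2.trans (Nat.le_succ L),
      fun j hj => ⟨fun hjz => ?_, fun hjn => ?_⟩⟩
    · by_contra hcon
      have := hx (not_lt.mp hcon)
      linarith [(Nat.find_spec h).1]
    · have := Nat.find_min h hjn
      by_contra hcon
      exact this ⟨not_le.mp hcon, hj⟩
  · push Not at h
    refine ⟨L + 1, le_rfl, fun j hj => ⟨fun _ => Nat.lt_succ_of_le hj, fun _ => ?_⟩⟩
    by_contra hcon
    exact absurd (h j (not_le.mp hcon)) (by omega)

lemma abs_div_sub_div_le {A B A' B' e : ℝ} (hA : 0 ≤ A) (hAB : A ≤ B) (hB : 0 < B) (hB' : 0 < B')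
    (h1 : |A - A'| ≤ e) (h2 : |B - B'| ≤ e) : |A / B - A' / B'| ≤ 2 * e / B' := by
  have hq0 : 0 ≤ A / B := by positivity
  have hq1 : A / B ≤ 1 := (div_le_one hB).mpr hAB
  have : A / B - A' / B' = ((A - A') - A / B * (B - B')) / B' := by
    field_simp
    ring
  rw [this, abs_div, abs_of_pos hB']
  gcongr
  calc |(A - A') - A / B * (B - B')| ≤ |A - A'| + |A / B * (B - B')| := abs_sub _ _
    _ ≤ e + 1 * e := by
        rw [abs_mul, abs_of_nonneg hq0]
        gcongr
    _ = 2 * e := by ring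

/-- A lattice measure whose weights are close to `exp (-d x ^ p)` has distribution function close
to that of the corresponding density. -/
lemma exists_lattice_cdf_bound {p : ℕ} (hp : Even p) (hp0 : p ≠ 0) {d : ℝ} (hd : 0 < d)
    {C c : ℝ} (hC : 0 < C) (hc : 0 < c) :
    ∃ K > 0, ∀ (ε Δ x₀ : ℝ) (L : ℕ) (a : ℕ → ℝ), 0 < ε → 0 < Δ → Δ ≤ 2 * ε → Δ ≤ 2 →
      (∀ j, 0 < a j) →
      (∀ j ≤ L, |a j - Real.exp (-(d * (x₀ + j * Δ) ^ p))| ≤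
        C * ε * (1 + (x₀ + j * Δ) ^ 2)⁻¹) →
      x₀ ≤ -(c / ε) → c / ε ≤ x₀ + L * Δ →
      ∀ z : ℝ, |(∑ j ∈ Finset.range (L + 1), if x₀ + j * Δ ≤ z then a j else 0) /
          (∑ j ∈ Finset.range (L + 1), a j) -
        expCDF d p z / ∫ t : ℝ, Real.exp (-(d * t ^ p))| ≤ K * ε := by
  obtain ⟨C₁, hC₁, hR⟩ := exists_riemann_sum_error hp hp0 hd hC
  obtain ⟨C₂, hC₂, hT⟩ := exists_expCDF_tail hp hp0 hd
  set I := ∫ t : ℝ, Real.exp (-(d * t ^ p)) with hI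
  have hIpos : 0 < I := integral_exp_pos (integrable_exp_neg_pow hp hp0 hd)
  set E := C₁ + 2 * (C₂ / c) + 2 with hE
  refine ⟨2 * E / I, by positivity, fun ε Δ x₀ L a hε hΔ hΔε hΔ2 hapos ha hx0 hxL z => ?_⟩
  have hmono := expCDF_mono hp hp0 hd
  have hnn := expCDF_nonneg d p
  have hle : ∀ z, expCDF d p z ≤ I := expCDF_le_integral hp hp0 hd
  obtain ⟨hT1, hT2⟩ := hT (c / ε) (by positivity)
  have hCc : C₂ / (c / ε) = C₂ / c * ε := by field_simp
  rw [hCc] at hT1 hT2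
  have hleft : expCDF d p x₀ ≤ C₂ / c * ε := (hmono hx0).trans hT1
  have hright : I - expCDF d p (x₀ + L * Δ) ≤ C₂ / c * ε := by linarith [hmono hxL]
  have hc2 : 0 ≤ C₂ / c * ε := by positivity
  set x : ℕ → ℝ := fun j => x₀ + j * Δ with hx
  have hxmono : Monotone x := by
    intro i j hij
    have : (i : ℝ) ≤ j := by exact_mod_cast hij
    simp only [hx]
    nlinarith
  have hsumn : ∀ n ≤ L + 1, |Δ * ∑ j ∈ Finset.range n, a j - expCDF d p (x n)| ≤
      (C₁ + C₂ / c) * ε := by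
    intro n hn
    have h1 := abs_le.mp (hR ε Δ x₀ n a hε hΔ hΔε hΔ2 fun j hj => ha j (by omega))
    have h3 : expCDF d p (x n) = expCDF d p (x₀ + n * Δ) := rfl
    have := hnn x₀
    rw [abs_le, h3]
    constructor <;> linarith
  have hxL1 : x (L + 1) = x L + Δ := by simp only [hx]; push_cast; ring
  have htot : |Δ * ∑ j ∈ Finset.range (L + 1), a j - I| ≤ E * ε := by
    have h1 := abs_le.mp (hsumn (L + 1) le_rfl)
    have h2 := hle (x (L + 1))
    have h3 := hmono (show x L ≤ x (L + 1) from hxmono (Nat.le_succ L))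
    have h4 : expCDF d p (x L) = expCDF d p (x₀ + L * Δ) := rfl
    rw [abs_le, hE]
    constructor <;> linarith
  obtain ⟨n, hn, hseg⟩ := exists_initial_segment hxmono L z
  have hfilter : (∑ j ∈ Finset.range (L + 1), if x₀ + j * Δ ≤ z then a j else 0) =
      ∑ j ∈ Finset.range n, a j := by
    rw [← Finset.sum_filter]
    refine Finset.sum_congr ?_ fun _ _ => rfl
    ext j
    simp only [Finset.mem_filter, Finset.mem_range]
    constructor
    · rintro ⟨h1, h2⟩
      exact (hseg j (by omega)).mp h2
    · intro h1
      exact ⟨by omega, (hseg j (by omega)).mpr h1⟩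
  have hz : |expCDF d p (x n) - expCDF d p z| ≤ (C₂ / c + 2) * ε := by
    rcases Nat.lt_or_ge L n with hLn | hLn
    · have hxz : x L ≤ z := (hseg L le_rfl).mpr hLn
      have h1 := hmono hxz
      have h2 := hmono (hxmono hLn.le)
      have h3 := hle z
      have h4 := hle (x n)
      have h5 : expCDF d p (x L) = expCDF d p (x₀ + L * Δ) := rfl
      rw [abs_le]
      constructor <;> linarith
    · have hzn : z < x n := by
        by_contra hcon
        exact lt_irrefl _ ((hseg n hLn).mp (not_lt.mp hcon))
      have h1 := hmono hzn.le
      rw [abs_of_nonneg (by linarith)]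
      rcases Nat.eq_zero_or_pos n with h0 | h0
      · have h2 : expCDF d p (x n) = expCDF d p x₀ := by rw [h0]; simp [hx]
        linarith [hnn z]
      · obtain ⟨i, rfl⟩ : ∃ i, n = i + 1 := ⟨n - 1, by omega⟩
        have h2 : x i ≤ z := (hseg i (by omega)).mpr (Nat.lt_succ_self i)
        have h3 : x (i + 1) = x i + Δ := by simp only [hx]; push_cast; ring
        have h4 := expCDF_sub_le hp hp0 hd hzn.le
        linarith
  have hA : |Δ * ∑ j ∈ Finset.range n, a j - expCDF d p z| ≤ E * ε := by
    have h1 := abs_le.mp (hsumn n hn)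
    have h2 := abs_le.mp hz
    rw [abs_le, hE]
    constructor <;> linarith
  have hsub : ∑ j ∈ Finset.range n, a j ≤ ∑ j ∈ Finset.range (L + 1), a j :=
    Finset.sum_le_sum_of_subset_of_nonneg (Finset.range_subset_range.mpr hn)
      fun j _ _ => (hapos j).le
  have hpos : 0 < ∑ j ∈ Finset.range (L + 1), a j :=
    Finset.sum_pos (fun j _ => hapos j) (by simp)
  have hnn' : 0 ≤ ∑ j ∈ Finset.range n, a j := Finset.sum_nonneg fun j _ => (hapos j).le
  have hfin := abs_div_sub_div_le (mul_nonneg hΔ.le hnn') (mul_le_mul_of_nonneg_left hsub hΔ.le)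
    (mul_pos hΔ hpos) hIpos hA htot
  rw [mul_div_mul_left _ _ hΔ.ne'] at hfin
  rw [hfilter]
  refine hfin.trans (le_of_eq ?_)
  ring

lemma exists_pow_expansion_bound (n : ℕ) : ∃ C > 0, ∀ y s : ℝ, |y| ≤ 1 → |s| ≤ 2 →
    |(y + s) ^ (n + 1) - y ^ (n + 1) - (n + 1) * s * y ^ n| ≤ C * s ^ 2 := by
  induction n with
  | zero =>
    refine ⟨1, one_pos, fun y s _ _ => ?_⟩
    have : (y + s) ^ (0 + 1) - y ^ (0 + 1) - ((0 : ℕ) + 1) * s * y ^ 0 = 0 := by simp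
    rw [this, abs_zero]
    positivity
  | succ n ih =>
    obtain ⟨C, hC, h⟩ := ih
    refine ⟨3 * C + (n + 1), by positivity, fun y s hy hs => ?_⟩
    have e : (y + s) ^ (n + 1 + 1) - y ^ (n + 1 + 1) - ((n + 1 : ℕ) + 1) * s * y ^ (n + 1) =
        (y + s) * ((y + s) ^ (n + 1) - y ^ (n + 1) - (n + 1) * s * y ^ n) +
          (n + 1) * s ^ 2 * y ^ n := by
      push_cast; ring
    have h1 : |y + s| ≤ 3 := (abs_add_le y s).trans (by linarith)
    have h2 : |y ^ n| ≤ 1 := by rw [abs_pow]; exact pow_le_one₀ (abs_nonneg y) hy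
    rw [e]
    refine (abs_add_le _ _).trans ?_
    rw [abs_mul, abs_mul ((n + 1) * s ^ 2), abs_of_nonneg (show 0 ≤ (n + 1) * s ^ 2 by positivity)]
    calc |y + s| * |(y + s) ^ (n + 1) - y ^ (n + 1) - (n + 1) * s * y ^ n|
          + (n + 1) * s ^ 2 * |y ^ n|
        ≤ 3 * (C * s ^ 2) + (n + 1) * s ^ 2 * 1 := by
          gcongr
          exact h y s hy hs
      _ = _ := by ring

lemma abs_log_add_sub_log_le {m s c : ℝ} (hc : 0 < c) (hm : c ≤ m) (hs : 0 ≤ s) :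
    |Real.log (m + s) - Real.log m| ≤ s / c := by
  have hm0 : 0 < m := hc.trans_le hm
  have h0 : Real.log m ≤ Real.log (m + s) := Real.log_le_log hm0 (by linarith)
  rw [abs_of_nonneg (by linarith), ← Real.log_div (by positivity) hm0.ne']
  have := Real.log_le_sub_one_of_pos (show 0 < (m + s) / m by positivity)
  have e : (m + s) / m - 1 = s / m := by field_simp; ring
  rw [e] at this
  exact this.trans (div_le_div_of_nonneg_left hs hc hm)

open Asymptotics Filter Topology in
lemma exists_log_increment_bound (J h : ℝ) {m₀ d : ℝ} (h0 : 0 < m₀) (h1 : m₀ < 1) (hd : 0 < d)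
    (q : ℕ)
    (hG : (fun m => rateDeriv J h m + (q + 1) * d * (m - m₀) ^ q) =O[𝓝 m₀]
      fun m => (m - m₀) ^ (q + 1)) :
    ∃ C > 0, ∃ δ > 0, ∀ N j : ℕ, 1 ≤ N → j + 1 ≤ N / 2 → |levelDensity N j - m₀| ≤ δ →
      |(Real.log (levelWeight J h N (j + 1)) + N * d * (levelDensity N (j + 1) - m₀) ^ (q + 1)) -
        (Real.log (levelWeight J h N j) + N * d * (levelDensity N j - m₀) ^ (q + 1))| ≤
        C * (|levelDensity N j - m₀| ^ (q + 1) + 1 / N) := by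
  obtain ⟨C₁, hC₁, hb⟩ := hG.exists_pos
  rw [isBigOWith_iff, Metric.eventually_nhds_iff] at hb
  obtain ⟨δ₁, hδ₁, hb⟩ := hb
  obtain ⟨C₂, hC₂, hpow⟩ := exists_pow_expansion_bound q
  refine ⟨2 * C₁ + (4 * d * C₂ + 6 / m₀ + 4 * |J|), by positivity,
    min (δ₁ / 2) (min (m₀ / 2) ((1 - m₀) / 2)),
    lt_min (by positivity) (lt_min (by positivity) (by linarith)), fun N j hN hj hm => ?_⟩
  have hN' : (1 : ℝ) ≤ N := by exact_mod_cast hN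
  have hN0 : (0 : ℝ) < N := by linarith
  rw [le_min_iff, le_min_iff] at hm
  obtain ⟨hm1, hm2, hm3⟩ := hm
  have hlog := log_levelWeight_succ_sub J h hN hj
  rw [levelDensity_succ]
  set m := levelDensity N j
  have hml : m₀ / 2 ≤ m := by linarith [(abs_le.mp hm2).1]
  have hmu : m < 1 := by linarith [(abs_le.mp hm3).2]
  have e1 : |rateDeriv J h m + (q + 1) * d * (m - m₀) ^ q| ≤ C₁ * |m - m₀| ^ (q + 1) := by
    have := hb (y := m) (by rw [Real.dist_eq]; linarith)
    simpa [Real.norm_eq_abs, abs_pow] using this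
  have e2 := abs_log_add_sub_log_le (half_pos h0) hml (show 0 ≤ 1 / (N : ℝ) by positivity)
  have e3 := abs_log_add_sub_log_le (half_pos h0) hml (show 0 ≤ 2 / (N : ℝ) by positivity)
  have e4 := hpow (m - m₀) (2 / N) (by linarith) (by
    rw [abs_of_nonneg (by positivity), div_le_iff₀ hN0]; linarith)
  set R := (m - m₀ + 2 / N) ^ (q + 1) - (m - m₀) ^ (q + 1) - (q + 1) * (2 / N) * (m - m₀) ^ q
    with hR
  have e5 : (m + 2 / N - m₀) ^ (q + 1) = R + (m - m₀) ^ (q + 1) +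
      (q + 1) * (2 / N) * (m - m₀) ^ q := by
    rw [hR, show m + 2 / N - m₀ = m - m₀ + 2 / N by ring]; ring
  have e6 : (Real.log (levelWeight J h N (j + 1)) + N * d * (m + 2 / N - m₀) ^ (q + 1)) -
        (Real.log (levelWeight J h N j) + N * d * (m - m₀) ^ (q + 1)) =
      2 * (rateDeriv J h m + (q + 1) * d * (m - m₀) ^ q) + N * d * R
        - (Real.log (m + 1 / N) - Real.log m) - (Real.log (m + 2 / N) - Real.log m)
        + 4 * J / N := by
    have e7 : N * d * ((q + 1) * (2 / N) * (m - m₀) ^ q) = 2 * ((q + 1) * d * (m - m₀) ^ q) := by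
      field_simp
    rw [e5]
    rw [rateDeriv]
    linarith
  rw [e6]
  have e8 : |N * d * R| ≤ 4 * d * C₂ * (1 / N) := by
    rw [abs_mul, abs_of_pos (by positivity)]
    calc N * d * |R| ≤ N * d * (C₂ * (2 / N) ^ 2) := by gcongr
      _ = _ := by field_simp; ring
  have e9 : |4 * J / N| = 4 * |J| * (1 / N) := by
    rw [abs_div, abs_mul, abs_of_pos hN0]; norm_num; ring
  have e10 : 1 / (N : ℝ) / (m₀ / 2) + 2 / N / (m₀ / 2) = 6 / m₀ * (1 / N) := by field_simp; ring
  set y := |m - m₀| ^ (q + 1)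
  have hy : 0 ≤ y := by positivity
  have e11 : |2 * (rateDeriv J h m + (q + 1) * d * (m - m₀) ^ q)| ≤ 2 * (C₁ * y) := by
    rw [abs_mul, abs_two]; gcongr
  have hextra : 0 ≤ (4 * d * C₂ + 6 / m₀ + 4 * |J|) * y := by positivity
  have hextra' : 0 ≤ 2 * C₁ * (1 / (N : ℝ)) := by positivity
  have a1 := abs_le.mp e11
  have a2 := abs_le.mp e8
  have a3 := abs_le.mp e2
  have a4 := abs_le.mp e3
  have a5 := abs_le.mp e9.le
  have hexp : (2 * C₁ + (4 * d * C₂ + 6 / m₀ + 4 * |J|)) * (y + 1 / N) =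
      2 * (C₁ * y) + 2 * C₁ * (1 / N) + (4 * d * C₂ + 6 / m₀ + 4 * |J|) * y
        + 4 * d * C₂ * (1 / N) + 6 / m₀ * (1 / N) + 4 * |J| * (1 / N) := by ring
  rw [hexp, abs_le]
  constructor <;> linarith [a1.1, a1.2, a2.1, a2.2, a3.1, a3.2, a4.1, a4.2, a5.1, a5.2]

lemma abs_sub_le_of_increment {E : ℕ → ℝ} {B : ℝ} {i j : ℕ} (hij : i ≤ j)
    (h : ∀ l, i ≤ l → l < j → |E (l + 1) - E l| ≤ B) : |E j - E i| ≤ ((j : ℝ) - i) * B := by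
  induction j, hij using Nat.le_induction with
  | base => simp
  | succ j hij ih =>
    have h1 := ih fun l hl hlj => h l hl (by omega)
    have h2 := h j hij (Nat.lt_succ_self j)
    have := abs_add_le (E (j + 1) - E j) (E j - E i)
    rw [sub_add_sub_cancel] at this
    push_cast
    linarith

lemma levelDensity_mono (N : ℕ) : Monotone (levelDensity N) := by
  intro i j hij
  unfold levelDensity
  gcongr

lemma levelDensity_sub {N : ℕ} (hN : 1 ≤ N) (i j : ℕ) :
    ((j : ℝ) - i) = N * (levelDensity N j - levelDensity N i) / 2 := by
  have := mul_levelDensity hN i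
  have := mul_levelDensity hN j
  push_cast at *
  linarith

open Asymptotics Filter Topology in
lemma exists_log_levelWeight_bound (J h : ℝ) {m₀ d : ℝ} (h0 : 0 < m₀) (h1 : m₀ < 1) (hd : 0 < d)
    (q : ℕ) (hq : 1 ≤ q)
    (hG : (fun m => rateDeriv J h m + (q + 1) * d * (m - m₀) ^ q) =O[𝓝 m₀]
      fun m => (m - m₀) ^ (q + 1)) :
    ∃ C > 0, ∃ δ > 0, ∀ N j₀ j : ℕ, 2 ≤ N → j₀ ≤ N / 2 → j ≤ N / 2 →
      |levelDensity N j₀ - m₀| ≤ 2 / N → |levelDensity N j - m₀| + 2 / N ≤ δ →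
      |Real.log (levelWeight J h N j) - Real.log (levelWeight J h N j₀) +
          N * d * (levelDensity N j - m₀) ^ (q + 1)| ≤
        C * (N * (|levelDensity N j - m₀| + 2 / N) ^ (q + 2)
          + (|levelDensity N j - m₀| + 2 / N)) := by
  obtain ⟨C, hC, δ, hδ, hinc⟩ := exists_log_increment_bound J h h0 h1 hd q hG
  refine ⟨C + 2 * d, by positivity, δ, hδ, fun N j₀ j hN2 hj₀ hj hy₀ hv => ?_⟩
  have hN : 1 ≤ N := by omega
  have hN2' : (2 : ℝ) ≤ N := by exact_mod_cast hN2
  have hN0 : (0 : ℝ) < N := by linarith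
  set y : ℕ → ℝ := fun i => levelDensity N i - m₀ with hy
  set v := |y j| + 2 / N with hvdef
  have hv0 : 0 ≤ v := by positivity
  set E : ℕ → ℝ := fun i => Real.log (levelWeight J h N i) + N * d * (y i) ^ (q + 1) with hE
  have hpair : ∀ a b : ℕ, a ≤ b → b ≤ N / 2 → |y a| ≤ v → |y b| ≤ v →
      |E b - E a| ≤ C * (N * v ^ (q + 2) + v) := by
    intro a b hab hb ha hbv
    have hstep : ∀ l, a ≤ l → l < b → |E (l + 1) - E l| ≤ C * (v ^ (q + 1) + 1 / N) := by
      intro l hal hlb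
      have hyl : |y l| ≤ v := by
        have h1 := levelDensity_mono N hal
        have h2 := levelDensity_mono N hlb.le
        rw [abs_le] at *
        simp only [hy] at *
        constructor <;> linarith
      refine (hinc N l hN (by omega) (hyl.trans hv)).trans ?_
      gcongr
    refine (abs_sub_le_of_increment hab hstep).trans ?_
    have hlen : (b : ℝ) - a ≤ N * v := by
      rw [levelDensity_sub hN a b]
      have : levelDensity N b - levelDensity N a = y b - y a := by simp only [hy]; ring
      rw [this]
      have h3 := (abs_le.mp ha).1
      have h4 := (abs_le.mp hbv).2
      nlinarith
    calc ((b : ℝ) - a) * (C * (v ^ (q + 1) + 1 / N))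
        ≤ (N * v) * (C * (v ^ (q + 1) + 1 / N)) := by gcongr
      _ = C * (N * v ^ (q + 2) + v) := by field_simp; ring
  have hyj : |y j| ≤ v := by
    have : 0 ≤ 2 / (N : ℝ) := by positivity
    linarith
  have hyj₀ : |y j₀| ≤ v := hy₀.trans (by linarith [abs_nonneg (y j)])
  have hdiff : |E j - E j₀| ≤ C * (N * v ^ (q + 2) + v) := by
    rcases le_total j₀ j with hle | hle
    · exact hpair j₀ j hle hj hyj₀ hyj
    · rw [abs_sub_comm]
      exact hpair j j₀ hle hj₀ hyj hyj₀
  have hbase : |N * d * (y j₀) ^ (q + 1)| ≤ 2 * d * v := by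
    have hy1 : |y j₀| ≤ 1 := hy₀.trans (by rw [div_le_one hN0]; exact hN2')
    have hpow : |y j₀| ^ q ≤ 2 / N :=
      (pow_le_of_le_one (abs_nonneg _) hy1 (by omega)).trans hy₀
    rw [abs_mul, abs_of_pos (by positivity), abs_pow, pow_succ]
    calc N * d * (|y j₀| ^ q * |y j₀|) ≤ N * d * (2 / N * v) := by gcongr
      _ = 2 * d * v := by field_simp
  have hsplit : Real.log (levelWeight J h N j) - Real.log (levelWeight J h N j₀) +
      N * d * (y j) ^ (q + 1) = (E j - E j₀) + N * d * (y j₀) ^ (q + 1) := by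
    simp only [hE]; ring
  rw [hsplit]
  refine (abs_add_le _ _).trans ?_
  have : 0 ≤ 2 * d * (N * v ^ (q + 2)) := by positivity
  linarith

lemma exists_exp_perturbation_bound {p : ℕ} (hp : Even p) (hp0 : p ≠ 0) {d C : ℝ} (hd : 0 < d)
    (hC : 0 < C) : ∃ δ > 0, ∃ C' > 0, ∀ ε x X : ℝ, 0 ≤ ε → |X| ≤ C * ε * (|x| + 2) ^ (p + 1) →
      |X| ≤ C * δ * (|x| + 2) ^ p →
      |Real.exp (-(d * x ^ p) + X) - Real.exp (-(d * x ^ p))| ≤ C' * ε * (1 + x ^ 2)⁻¹ := by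
  obtain ⟨B, hB, hbound⟩ := exists_pow_mul_exp_neg_le hp hp0 (half_pos hd) (p + 3)
  refine ⟨d / (2 * C * 2 ^ (p - 1)), by positivity, C * B * Real.exp (d / 2 * 2 ^ p),
    by positivity, fun ε x X hε h1 h2 => ?_⟩
  have hX : |X| ≤ d / 2 * x ^ p + d / 2 * 2 ^ p := by
    have := add_pow_le (abs_nonneg x) (zero_le_two (α := ℝ)) p
    rw [hp.pow_abs] at this
    calc |X| ≤ C * (d / (2 * C * 2 ^ (p - 1))) * (|x| + 2) ^ p := h2
      _ ≤ C * (d / (2 * C * 2 ^ (p - 1))) * (2 ^ (p - 1) * (x ^ p + 2 ^ p)) := by gcongr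
      _ = _ := by field_simp
  have hexp : |Real.exp X - 1| ≤ |X| * Real.exp |X| := by
    rcases le_total 0 X with h | h
    · have h3 := Real.add_one_le_exp (-X)
      have h4 : Real.exp (-X) * Real.exp X = 1 := by rw [← Real.exp_add]; simp
      rw [abs_of_nonneg h, abs_of_nonneg (by linarith [Real.add_one_le_exp X])]
      nlinarith [Real.exp_pos X]
    · have h3 := Real.add_one_le_exp X
      have h4 : 1 ≤ Real.exp (-X) := Real.one_le_exp (by linarith)
      rw [abs_of_nonpos h, abs_of_nonpos (by linarith [Real.exp_le_one_iff.mpr h])]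
      nlinarith
  have e : Real.exp (-(d * x ^ p) + X) - Real.exp (-(d * x ^ p)) =
      Real.exp (-(d * x ^ p)) * (Real.exp X - 1) := by rw [Real.exp_add]; ring
  rw [e, abs_mul, Real.abs_exp]
  have hmain : (1 + x ^ 2) * (Real.exp (-(d * x ^ p)) * |Real.exp X - 1|) ≤
      C * B * Real.exp (d / 2 * 2 ^ p) * ε := by
    calc (1 + x ^ 2) * (Real.exp (-(d * x ^ p)) * |Real.exp X - 1|)
        ≤ (|x| + 2) ^ 2 * (Real.exp (-(d * x ^ p)) * (C * ε * (|x| + 2) ^ (p + 1) *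
            Real.exp (d / 2 * x ^ p + d / 2 * 2 ^ p))) := by
          gcongr
          · exact one_add_sq_le x
          · refine hexp.trans ?_
            gcongr
      _ = C * ε * Real.exp (d / 2 * 2 ^ p) *
            ((|x| + 2) ^ (p + 3) * Real.exp (-(d / 2 * x ^ p))) := by
          rw [show -(d / 2 * x ^ p) = -(d * x ^ p) + d / 2 * x ^ p by ring, Real.exp_add,
            Real.exp_add]
          ring
      _ ≤ C * ε * Real.exp (d / 2 * 2 ^ p) * B := by
          gcongr
          exact hbound x
      _ = _ := by ring
  rw [← div_eq_mul_inv, le_div_iff₀ (by positivity)]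
  linarith

open Asymptotics Filter Topology in
lemma exists_levelWeight_near_bound (J h : ℝ) {m₀ d : ℝ} (h0 : 0 < m₀) (h1 : m₀ < 1) (hd : 0 < d)
    (q : ℕ) (hq : 1 ≤ q) (hp : Even (q + 1))
    (hG : (fun m => rateDeriv J h m + (q + 1) * d * (m - m₀) ^ q) =O[𝓝 m₀]
      fun m => (m - m₀) ^ (q + 1)) :
    ∃ C > 0, ∃ δ > 0, ∀ (N j₀ j : ℕ) (ε : ℝ), 2 ≤ N → 0 < ε → ε ≤ 1 → N * ε ^ (q + 1) = 1 →
      j₀ ≤ N / 2 → j ≤ N / 2 →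
      |levelDensity N j₀ - m₀| ≤ 2 / N → |levelDensity N j - m₀| + 2 / N ≤ δ →
      |levelWeight J h N j / levelWeight J h N j₀ -
          Real.exp (-(d * ((levelDensity N j - m₀) / ε) ^ (q + 1)))| ≤
        C * ε * (1 + ((levelDensity N j - m₀) / ε) ^ 2)⁻¹ := by
  obtain ⟨C₁, hC₁, δ₁, hδ₁, hlog⟩ := exists_log_levelWeight_bound J h h0 h1 hd q hq hG
  obtain ⟨δ₂, hδ₂, C, hC, hpert⟩ :=
    exists_exp_perturbation_bound hp (by omega) hd (show 0 < 2 * C₁ by positivity)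
  refine ⟨C, hC, min δ₁ δ₂, lt_min hδ₁ hδ₂, fun N j₀ j ε hN hε hε1 hNε hj₀ hj hy₀ hv => ?_⟩
  have hN0 : (0 : ℝ) < N := by positivity
  have hL := hlog N j₀ j hN hj₀ hj hy₀ (hv.trans (min_le_left _ _))
  have hvδ : |levelDensity N j - m₀| + 2 / N ≤ δ₂ := hv.trans (min_le_right _ _)
  set y := levelDensity N j - m₀
  set X := Real.log (levelWeight J h N j) - Real.log (levelWeight J h N j₀) +
    N * d * y ^ (q + 1) with hX
  set v := |y| + 2 / N with hvdef
  have hv0 : 0 ≤ v := by positivity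
  have hyx : y = y / ε * ε := by field_simp
  have hpow : N * d * y ^ (q + 1) = d * (y / ε) ^ (q + 1) := by
    rw [div_pow]
    have : (N : ℝ) = 1 / ε ^ (q + 1) := by field_simp; linarith
    rw [this]; field_simp
  have hw1 : 1 ≤ |y / ε| + 2 := by linarith [abs_nonneg (y / ε)]
  have hvw : v ≤ ε * (|y / ε| + 2) := by
    have hNinv : 1 / (N : ℝ) = ε ^ (q + 1) := by field_simp; linarith
    have hNε' : 1 / (N : ℝ) ≤ ε := by
      rw [hNinv]; exact pow_le_of_le_one hε.le hε1 (by omega)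
    have : |y| = ε * |y / ε| := by rw [abs_div, abs_of_pos hε]; field_simp
    rw [hvdef, this, show 2 / (N : ℝ) = 2 * (1 / N) by ring]
    linarith
  have hNv : N * v ^ (q + 1) ≤ (|y / ε| + 2) ^ (q + 1) := by
    calc N * v ^ (q + 1) ≤ N * (ε * (|y / ε| + 2)) ^ (q + 1) := by gcongr
      _ = N * ε ^ (q + 1) * (|y / ε| + 2) ^ (q + 1) := by rw [mul_pow]; ring
      _ = _ := by rw [hNε, one_mul]
  have hsplit : N * v ^ (q + 2) + v ≤ 2 * (v * (|y / ε| + 2) ^ (q + 1)) := by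
    have e1 : N * v ^ (q + 2) = v * (N * v ^ (q + 1)) := by ring
    have e2 := mul_le_mul_of_nonneg_left hNv hv0
    have e3 := mul_le_mul_of_nonneg_left (one_le_pow₀ hw1 (n := q + 1)) hv0
    linarith
  have hX0 : |X| ≤ 2 * C₁ * (v * (|y / ε| + 2) ^ (q + 1)) := by
    refine hL.trans ?_
    calc C₁ * (N * v ^ (q + 2) + v) ≤ C₁ * (2 * (v * (|y / ε| + 2) ^ (q + 1))) := by gcongr
      _ = _ := by ring
  have hX1 : |X| ≤ 2 * C₁ * ε * (|y / ε| + 2) ^ (q + 1 + 1) := by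
    refine hX0.trans ?_
    calc 2 * C₁ * (v * (|y / ε| + 2) ^ (q + 1))
        ≤ 2 * C₁ * (ε * (|y / ε| + 2) * (|y / ε| + 2) ^ (q + 1)) := by gcongr
      _ = _ := by ring
  have hX2 : |X| ≤ 2 * C₁ * δ₂ * (|y / ε| + 2) ^ (q + 1) := by
    refine hX0.trans ?_
    rw [mul_assoc (2 * C₁)]
    gcongr
  have hfin := hpert ε (y / ε) X hε.le hX1 hX2
  have hratio : levelWeight J h N j / levelWeight J h N j₀ =
      Real.exp (-(d * (y / ε) ^ (q + 1)) + X) := by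
    rw [hX, hpow, show -(d * (y / ε) ^ (q + 1)) + (Real.log (levelWeight J h N j) -
        Real.log (levelWeight J h N j₀) + d * (y / ε) ^ (q + 1)) =
      Real.log (levelWeight J h N j) - Real.log (levelWeight J h N j₀) by ring, Real.exp_sub,
      Real.exp_log (levelWeight_pos J h N j), Real.exp_log (levelWeight_pos J h N j₀)]
  rw [hratio]
  exact hfin

lemma exists_exp_neg_mul_le {c : ℝ} (hc : 0 < c) : ∃ B > 0, ∀ N : ℕ, 1 ≤ N →
    Real.exp (-(N * c) + 2 * (Real.log N + 1)) ≤ B / (N : ℝ) ^ 2 := by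
  refine ⟨Real.exp 2 * (Nat.factorial 4) / c ^ 4, by positivity, fun N hN => ?_⟩
  have hN0 : (0 : ℝ) < N := by exact_mod_cast hN
  have h1 := Real.pow_div_factorial_le_exp (N * c) (by positivity) 4
  have h2 : Real.exp (-(N * c)) ≤ (Nat.factorial 4) / (N * c) ^ 4 := by
    rw [Real.exp_neg]
    refine (inv_anti₀ (by positivity) h1).trans_eq ?_
    rw [inv_div]
  have e : Real.exp (-(N * c) + 2 * (Real.log N + 1)) =
      Real.exp (-(N * c)) * ((N : ℝ) ^ 2 * Real.exp 2) := by
    rw [show -(N * c) + 2 * (Real.log N + 1) = -(N * c) + (Real.log N + Real.log N + 2) by ring,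
      Real.exp_add, Real.exp_add, Real.exp_add, Real.exp_log hN0]
    ring
  rw [e]
  calc Real.exp (-(N * c)) * ((N : ℝ) ^ 2 * Real.exp 2)
      ≤ (Nat.factorial 4) / (N * c) ^ 4 * ((N : ℝ) ^ 2 * Real.exp 2) := by gcongr
    _ = _ := by field_simp

lemma exists_levelWeight_far_bound (J h : ℝ) {m₀ d δ : ℝ} (hm₀ : m₀ ∈ Set.Icc (0 : ℝ) 1)
    (hd : 0 < d) (hδ : 0 < δ) {p : ℕ} (hp : Even p) (hp0 : p ≠ 0)
    (hmax : ∀ m ∈ Set.Icc (0 : ℝ) 1, ptilde J h m ≤ ptilde J h m₀)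
    (huniq : ∀ m ∈ Set.Icc (0 : ℝ) 1, ptilde J h m = ptilde J h m₀ → m = m₀)
    (hg : m₀ = gFun (tauFun J h m₀)) :
    ∃ C > 0, ∃ N₀ : ℕ, ∀ (N j₀ j : ℕ) (ε : ℝ), N₀ ≤ N → 1 ≤ N → 0 < ε → ε ≤ 1 →
      N * ε ^ p = 1 → j₀ ≤ N / 2 → j ≤ N / 2 →
      |levelDensity N j₀ - m₀| ≤ 2 / N → δ ≤ |levelDensity N j - m₀| →
      |levelWeight J h N j / levelWeight J h N j₀ -
          Real.exp (-(d * ((levelDensity N j - m₀) / ε) ^ p))| ≤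
        C * ε * (1 + ((levelDensity N j - m₀) / ε) ^ 2)⁻¹ := by
  obtain ⟨η, hη, hgap⟩ := exists_rateFun_gap J h hmax huniq hg hδ
  obtain ⟨r, hr, hcont⟩ := Metric.continuous_iff.mp (continuous_rateFun J h) m₀ (η / 2)
    (half_pos hη)
  obtain ⟨B, hB, hexp⟩ := exists_exp_neg_mul_le (half_pos hη)
  obtain ⟨A, hA, hinv⟩ := exists_exp_neg_le_inv hp hp0 hd
  obtain ⟨N₀, hN₀⟩ := exists_nat_gt (2 / r)
  refine ⟨2 * B + A / δ, by positivity, N₀, fun N j₀ j ε hNN hN hε hε1 hNε hj₀ hj hy₀ hy => ?_⟩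
  have hN0 : (0 : ℝ) < N := by exact_mod_cast hN
  have hm := levelDensity_mem hN hj
  have hclose : rateFun J h m₀ - η / 2 ≤ rateFun J h (levelDensity N j₀) := by
    have : 2 / (N : ℝ) < r := by
      rw [div_lt_comm₀ hN0 hr]
      exact hN₀.trans_le (by exact_mod_cast hNN)
    have := hcont (levelDensity N j₀) (by rw [Real.dist_eq]; linarith)
    rw [Real.dist_eq, abs_lt] at this
    linarith [this.1]
  have hratio : levelWeight J h N j / levelWeight J h N j₀ ≤ B / (N : ℝ) ^ 2 := by
    have u := log_levelWeight_le J h hN hj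
    have l := le_log_levelWeight J h hN hj₀
    have g := hgap _ hm hy
    refine le_trans ?_ (hexp N hN)
    rw [← Real.exp_log (levelWeight_pos J h N j), ← Real.exp_log (levelWeight_pos J h N j₀),
      ← Real.exp_sub, Real.exp_le_exp]
    have := mul_le_mul_of_nonneg_left (show rateFun J h (levelDensity N j) -
      rateFun J h (levelDensity N j₀) ≤ -(η / 2) by linarith) hN0.le
    linarith
  set y := levelDensity N j - m₀ with hydef
  have hy1 : |y| ≤ 1 := by
    rw [abs_le]; constructor <;> linarith [hm.1, hm.2, hm₀.1, hm₀.2]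
  have hx0 : (0 : ℝ) < 1 + (y / ε) ^ 2 := by positivity
  have hx : ε ^ 2 ≤ 2 * (1 + (y / ε) ^ 2)⁻¹ := by
    rw [← div_eq_mul_inv, le_div_iff₀ hx0]
    have e : ε ^ 2 * (1 + (y / ε) ^ 2) = ε ^ 2 + y ^ 2 := by field_simp
    rw [e]
    have : y ^ 2 ≤ 1 := (sq_le_one_iff_abs_le_one y).mpr hy1
    have : ε ^ 2 ≤ 1 := pow_le_one₀ hε.le hε1
    linarith
  have hfirst : levelWeight J h N j / levelWeight J h N j₀ ≤
      2 * B * ε * (1 + (y / ε) ^ 2)⁻¹ := by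
    refine hratio.trans ?_
    have hNinv : 1 / (N : ℝ) = ε ^ p := by field_simp; linarith
    have hp2 : 2 ≤ p := by
      obtain ⟨r, rfl⟩ := hp
      omega
    have hpow : (1 / (N : ℝ)) ^ 2 ≤ ε ^ 3 := by
      rw [hNinv, ← pow_mul]
      exact pow_le_pow_of_le_one hε.le hε1 (by omega)
    calc B / (N : ℝ) ^ 2 = B * (1 / (N : ℝ)) ^ 2 := by ring
      _ ≤ B * (ε * ε ^ 2) := by
          gcongr
          exact hpow.trans_eq (by ring)
      _ ≤ B * (ε * (2 * (1 + (y / ε) ^ 2)⁻¹)) := by gcongr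
      _ = _ := by ring
  have hsecond : Real.exp (-(d * (y / ε) ^ p)) ≤ A / δ * ε * (1 + (y / ε) ^ 2)⁻¹ := by
    have hxl : δ / ε ≤ |y / ε| + 2 := by
      rw [abs_div, abs_of_pos hε]
      have : δ / ε ≤ |y| / ε := by gcongr
      linarith
    have := (mul_le_mul_of_nonneg_right hxl (Real.exp_pos (-(d * (y / ε) ^ p))).le).trans
      (hinv (y / ε))
    calc Real.exp (-(d * (y / ε) ^ p))
        = ε / δ * (δ / ε * Real.exp (-(d * (y / ε) ^ p))) := by field_simp
      _ ≤ ε / δ * (A * (1 + (y / ε) ^ 2)⁻¹) := by gcongr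
      _ = _ := by ring
  have hpos : 0 < levelWeight J h N j / levelWeight J h N j₀ :=
    div_pos (levelWeight_pos J h N j) (levelWeight_pos J h N j₀)
  have hpos2 := Real.exp_pos (-(d * (y / ε) ^ p))
  have hx1 : 0 ≤ 2 * B * ε * (1 + (y / ε) ^ 2)⁻¹ := by positivity
  have hx2 : 0 ≤ A / δ * ε * (1 + (y / ε) ^ 2)⁻¹ := by positivity
  have e : (2 * B + A / δ) * ε * (1 + (y / ε) ^ 2)⁻¹ =
      2 * B * ε * (1 + (y / ε) ^ 2)⁻¹ + A / δ * ε * (1 + (y / ε) ^ 2)⁻¹ := by ring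
  rw [e, abs_le]
  constructor <;> linarith

open Asymptotics Filter Topology in
lemma exists_levelWeight_bound (J h : ℝ) {m₀ d : ℝ} (h0 : 0 < m₀) (h1 : m₀ < 1) (hd : 0 < d)
    (q : ℕ) (hq : 1 ≤ q) (hp : Even (q + 1))
    (hG : (fun m => rateDeriv J h m + (q + 1) * d * (m - m₀) ^ q) =O[𝓝 m₀]
      fun m => (m - m₀) ^ (q + 1))
    (hmax : ∀ m ∈ Set.Icc (0 : ℝ) 1, ptilde J h m ≤ ptilde J h m₀)
    (huniq : ∀ m ∈ Set.Icc (0 : ℝ) 1, ptilde J h m = ptilde J h m₀ → m = m₀)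
    (hg : m₀ = gFun (tauFun J h m₀)) :
    ∃ C > 0, ∃ N₀ : ℕ, ∀ (N j₀ j : ℕ) (ε : ℝ), N₀ ≤ N → 2 ≤ N → 0 < ε → ε ≤ 1 →
      N * ε ^ (q + 1) = 1 → j₀ ≤ N / 2 → j ≤ N / 2 → |levelDensity N j₀ - m₀| ≤ 2 / N →
      |levelWeight J h N j / levelWeight J h N j₀ -
          Real.exp (-(d * ((levelDensity N j - m₀) / ε) ^ (q + 1)))| ≤
        C * ε * (1 + ((levelDensity N j - m₀) / ε) ^ 2)⁻¹ := by
  obtain ⟨C₁, hC₁, δ, hδ, hnear⟩ := exists_levelWeight_near_bound J h h0 h1 hd q hq hp hG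
  obtain ⟨C₂, hC₂, N₁, hfar⟩ := exists_levelWeight_far_bound J h ⟨h0.le, h1.le⟩ hd (half_pos hδ)
    hp (by omega) hmax huniq hg
  obtain ⟨N₂, hN₂⟩ := exists_nat_gt (4 / δ)
  refine ⟨C₁ + C₂, by positivity, max N₁ N₂, fun N j₀ j ε hNN hN hε hε1 hNε hj₀ hj hy₀ => ?_⟩
  have hN0 : (0 : ℝ) < N := by positivity
  rw [max_le_iff] at hNN
  have hsmall : 2 / (N : ℝ) ≤ δ / 2 := by
    have h4 : 4 / δ < N := hN₂.trans_le (by exact_mod_cast hNN.2)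
    rw [div_lt_iff₀ hδ] at h4
    rw [div_le_iff₀ hN0]
    linarith
  have hc : 0 ≤ ε * (1 + ((levelDensity N j - m₀) / ε) ^ 2)⁻¹ := by positivity
  rcases le_total (δ / 2) |levelDensity N j - m₀| with hy | hy
  · refine (hfar N j₀ j ε hNN.1 (by omega) hε hε1 hNε hj₀ hj hy₀ hy).trans ?_
    nlinarith
  · refine (hnear N j₀ j ε hN hε hε1 hNε hj₀ hj hy₀ (by linarith)).trans ?_
    nlinarith

lemma exists_base_level {m₀ : ℝ} (h1 : m₀ ≤ 1) {N : ℕ} (hN : 1 ≤ N) (hNm : 1 ≤ N * m₀) :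
    ∃ j₀ ≤ N / 2, |levelDensity N j₀ - m₀| ≤ 2 / N := by
  have hN0 : (0 : ℝ) < N := by exact_mod_cast hN
  have hmod : ((N % 2 : ℕ) : ℝ) ≤ 1 := by
    exact_mod_cast Nat.le_of_lt_succ (Nat.mod_lt N two_pos)
  have ht : 0 ≤ (N * m₀ - (N % 2 : ℕ)) / 2 := by linarith
  have hle := Nat.floor_le ht
  have hlt := Nat.lt_floor_add_one ((N * m₀ - (N % 2 : ℕ)) / 2)
  set j₀ := ⌊(N * m₀ - (N % 2 : ℕ)) / 2⌋₊
  refine ⟨j₀, ?_, ?_⟩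
  · have : ((N % 2 + 2 * j₀ : ℕ) : ℝ) ≤ N := by
      push_cast
      nlinarith
    have : N % 2 + 2 * j₀ ≤ N := by exact_mod_cast this
    omega
  · have hm := mul_levelDensity hN j₀
    have e : levelDensity N j₀ - m₀ = (((N % 2 + 2 * j₀ : ℕ) : ℝ) - N * m₀) / N := by
      rw [← hm]; field_simp
    rw [e, abs_div, abs_of_pos hN0]
    gcongr
    rw [abs_le]
    push_cast
    constructor <;> linarith

open Asymptotics Filter Topology in
lemma exists_probConf_bound (J h : ℝ) {m₀ d : ℝ} (h0 : 0 < m₀) (h1 : m₀ < 1) (hd : 0 < d)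
    (q : ℕ) (hq : 1 ≤ q) (hp : Even (q + 1))
    (hG : (fun m => rateDeriv J h m + (q + 1) * d * (m - m₀) ^ q) =O[𝓝 m₀]
      fun m => (m - m₀) ^ (q + 1))
    (hmax : ∀ m ∈ Set.Icc (0 : ℝ) 1, ptilde J h m ≤ ptilde J h m₀)
    (huniq : ∀ m ∈ Set.Icc (0 : ℝ) 1, ptilde J h m = ptilde J h m₀ → m = m₀)
    (hg : m₀ = gFun (tauFun J h m₀)) :
    ∃ K > 0, ∃ N₀ : ℕ, ∀ (N : ℕ) (ε : ℝ), N₀ ≤ N → 0 < ε → ε ≤ 1 → N * ε ^ (q + 1) = 1 → ∀ z : ℝ,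
      |probConf N J h (fun σ => ((Msum σ : ℝ) - N * m₀) / (N * ε) ≤ z) -
        expCDF d (q + 1) z / ∫ t : ℝ, Real.exp (-(d * t ^ (q + 1)))| ≤ K * ε := by
  classical
  obtain ⟨C, hC, N₁, hloc⟩ := exists_levelWeight_bound J h h0 h1 hd q hq hp hG hmax huniq hg
  have hc : 0 < min (m₀ / 2) (1 - m₀) := lt_min (by linarith) (by linarith)
  obtain ⟨K, hK, hlat⟩ := exists_lattice_cdf_bound hp (by omega) hd hC hc
  obtain ⟨N₂, hN₂⟩ := exists_nat_gt (2 / m₀)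
  refine ⟨K, hK, max (max N₁ N₂) 2, fun N ε hNN hε hε1 hNε z => ?_⟩
  simp only [max_le_iff] at hNN
  obtain ⟨⟨hN1, hN2⟩, hN⟩ := hNN
  have hN0 : (0 : ℝ) < N := by positivity
  have hNm : 2 ≤ N * m₀ := by
    have h2 : 2 / m₀ < N := hN₂.trans_le (by exact_mod_cast hN2)
    rw [div_lt_iff₀ h0] at h2
    exact h2.le
  obtain ⟨j₀, hj₀, hy₀⟩ := exists_base_level h1.le (show 1 ≤ N by omega) (by linarith)
  have hpoint : ∀ j : ℕ, ((N % 2 : ℕ) - N * m₀) / (N * ε) + j * (2 / (N * ε)) =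
      (((N % 2 + 2 * j : ℕ) : ℝ) - N * m₀) / (N * ε) := by
    intro j; push_cast; ring
  have hpoint' : ∀ j : ℕ, ((N % 2 : ℕ) - N * m₀) / (N * ε) + j * (2 / (N * ε)) =
      (levelDensity N j - m₀) / ε := by
    intro j
    rw [hpoint, ← mul_levelDensity (show 1 ≤ N by omega) j]
    field_simp
  have hinv : 1 / (N * ε) ≤ ε := by
    have e : 1 / (N * ε) = ε ^ q := by
      rw [div_eq_iff (by positivity), ← hNε]; ring
    rw [e]
    exact pow_le_of_le_one hε.le hε1 (by omega)
  have hmod : ((N % 2 : ℕ) : ℝ) ≤ 1 := by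
    exact_mod_cast Nat.le_of_lt_succ (Nat.mod_lt N two_pos)
  have hw₀ := levelWeight_pos J h N j₀
  have hmain := hlat ε (2 / (N * ε)) (((N % 2 : ℕ) - N * m₀) / (N * ε)) (N / 2)
    (fun j => levelWeight J h N j / levelWeight J h N j₀) hε (by positivity)
    (by rw [show 2 / (N * ε) = 2 * (1 / (N * ε)) by ring]; linarith)
    (by rw [show 2 / (N * ε) = 2 * (1 / (N * ε)) by ring]; linarith)
    (fun j => div_pos (levelWeight_pos J h N j) hw₀)
    (fun j hj => by
      rw [hpoint']
      exact hloc N j₀ j ε hN1 hN hε hε1 hNε hj₀ hj hy₀)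
    (by
      have e1 : min (m₀ / 2) (1 - m₀) / ε ≤ (m₀ / 2) / ε := by
        gcongr; exact min_le_left _ _
      have e2 : ((N % 2 : ℕ) - N * m₀) / (N * ε) ≤ (-(N * (m₀ / 2))) / (N * ε) := by
        gcongr; linarith
      have e3 : (-(N * (m₀ / 2))) / (N * ε) = -((m₀ / 2) / ε) := by field_simp
      linarith)
    (by
      rw [hpoint]
      have e1 : N % 2 + 2 * (N / 2) = N := Nat.mod_add_div N 2
      have e2 : ((N : ℝ) - N * m₀) / (N * ε) = (1 - m₀) / ε := by field_simp
      rw [e1, e2]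
      gcongr
      exact min_le_right _ _) z
  rw [probConf_eq_levelWeight N J h (fun r : ℕ => ((r : ℝ) - N * m₀) / (N * ε) ≤ z)]
  simp only [hpoint, ← Finset.sum_div] at hmain
  have hsum : (∑ j ∈ Finset.range (N / 2 + 1),
      if (((N % 2 + 2 * j : ℕ) : ℝ) - N * m₀) / (N * ε) ≤ z then
        levelWeight J h N j / levelWeight J h N j₀ else 0) =
      (∑ j ∈ Finset.range (N / 2 + 1),
        if (((N % 2 + 2 * j : ℕ) : ℝ) - N * m₀) / (N * ε) ≤ z then
          levelWeight J h N j else 0) / levelWeight J h N j₀ := by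
    rw [Finset.sum_div]
    refine Finset.sum_congr rfl fun j _ => ?_
    split_ifs <;> simp
  rw [hsum, div_div_div_cancel_right₀ hw₀.ne'] at hmain
  exact hmain

lemma wConf_nonneg (N : ℕ) (J h : ℝ) (σ : Config N) : 0 ≤ wConf N J h σ := by
  unfold wConf
  positivity

lemma probConf_mem_Icc (N : ℕ) (J h : ℝ) (A : Config N → Prop) :
    probConf N J h A ∈ Set.Icc (0 : ℝ) 1 := by
  have hle : ∀ σ : Config N, Set.indicator {σ | A σ} (wConf N J h) σ ≤ wConf N J h σ :=
    Set.indicator_le_self' fun σ _ => wConf_nonneg N J h σ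
  have h0 : ∀ σ : Config N, 0 ≤ Set.indicator {σ | A σ} (wConf N J h) σ :=
    Set.indicator_nonneg fun σ _ => wConf_nonneg N J h σ
  exact ⟨div_nonneg (Finset.sum_nonneg fun σ _ => h0 σ)
      (Finset.sum_nonneg fun σ _ => wConf_nonneg N J h σ),
    div_le_one_of_le₀ (Finset.sum_le_sum fun σ _ => hle σ)
      (Finset.sum_nonneg fun σ _ => wConf_nonneg N J h σ)⟩

lemma Ltwo_eq_LoneCofactor {J h m : ℝ} (hm : m ^ 2 = (1 - m) * Real.exp (2 * tauFun J h m)) :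
    Ltwo J h m = 4 * LoneCofactor J h m := by
  unfold Ltwo LoneCofactor
  rw [← hm]
  ring

/-- Berry–Esseen bound for the magnetization of the weighted
Curie–Weiss model: with `W = (M - N m₀)/N^{(2k+1)/(2k+2)}` and `Z` having density
`c₁ exp(-d z^{2k+2})`, `d = 2 L₁^{(2k+1)}(m₀)/((2k+2)! L₂(m₀))`, one has
`sup_z |ℙ(W ≤ z) - ℙ(Z ≤ z)| ≤ K N^{-1/(2k+2)}`. -/
theorem stmt11 (J h : ℝ) (hJ : 0 ≤ J) (k : ℕ) (hk : k = 0 ∨ k = 1)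
    (m₀ : ℝ) (hm₀ : m₀ ∈ Set.Icc (0:ℝ) 1)
    (hmax : ∀ m ∈ Set.Icc (0:ℝ) 1, ptilde J h m ≤ ptilde J h m₀)
    (huniq : ∀ m ∈ Set.Icc (0:ℝ) 1, ptilde J h m = ptilde J h m₀ → m = m₀)
    (hder0 : ∀ l : ℕ, l ≤ 2*k → iteratedDeriv l (Lone J h) m₀ = 0)
    (hderpos : 0 < iteratedDeriv (2*k+1) (Lone J h) m₀) :
    ∃ K : ℝ, ∀ N : ℕ, 1 ≤ N → ∀ z : ℝ,
      let d : ℝ := 2 * iteratedDeriv (2*k+1) (Lone J h) m₀ /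
        ((Nat.factorial (2*k+2) : ℝ) * Ltwo J h m₀)
      |probConf N J h
          (fun σ => ((Msum σ : ℝ) - N * m₀) / (N:ℝ) ^ ((2*(k:ℝ)+1)/(2*(k:ℝ)+2)) ≤ z)
        - (∫ t in Set.Iic z, Real.exp (-(d * t^(2*k+2)))) /
            ∫ t : ℝ, Real.exp (-(d * t^(2*k+2)))|
      ≤ K / (N:ℝ) ^ ((1:ℝ)/(2*(k:ℝ)+2)) := by
  have hzero : Lone J h m₀ = 0 := by simpa using hder0 0 (Nat.zero_le _)
  have hderiv : 0 ≤ deriv (Lone J h) m₀ := by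
    rw [← iteratedDeriv_one]
    rcases Nat.eq_zero_or_pos k with rfl | hkpos
    · simpa using hderpos.le
    · exact (hder0 1 (by omega)).ge
  obtain ⟨h0, h1, hcrit⟩ := critical_point_of_Lone J h hm₀ hzero hderiv
  have hg := eq_gFun_of_sq_eq h0.le hcrit
  have hcof := LoneCofactor_pos J h h0 h1
  have hLtwo := Ltwo_eq_LoneCofactor hcrit
  set d : ℝ := 2 * iteratedDeriv (2*k+1) (Lone J h) m₀ /
    ((Nat.factorial (2*k+2) : ℝ) * Ltwo J h m₀) with hd_def
  have hd : 0 < d := by rw [hd_def, hLtwo]; positivity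
  have hG := rateDeriv_isBigO J h h0 h1 (2 * k + 1) (by omega)
    (fun l hl => hder0 l (by omega))
  have hcoef : iteratedDeriv (2 * k + 1) (Lone J h) m₀ /
      (2 * (2 * k + 1).factorial * LoneCofactor J h m₀) = ((2 * k + 1 : ℕ) + 1) * d := by
    rw [hd_def, hLtwo, Nat.factorial_succ (2 * k + 1)]
    push_cast
    field_simp
    ring
  rw [hcoef] at hG
  have hp : Even (2 * k + 1 + 1) := ⟨k + 1, by ring⟩
  obtain ⟨K, hK, N₀, hbound⟩ := exists_probConf_bound J h h0 h1 hd (2 * k + 1) (by omega) hp hG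
    hmax huniq hg
  refine ⟨K + N₀, fun N hN z => ?_⟩
  have hN1 : (1 : ℝ) ≤ N := by exact_mod_cast hN
  have hN0 : (0 : ℝ) < N := by linarith
  have hk0 : (0 : ℝ) < 2 * (k : ℝ) + 2 := by positivity
  set ε : ℝ := ((N : ℝ) ^ ((1 : ℝ) / (2 * (k : ℝ) + 2)))⁻¹ with hε_def
  have hroot : 1 ≤ (N : ℝ) ^ ((1 : ℝ) / (2 * (k : ℝ) + 2)) :=
    Real.one_le_rpow hN1 (by positivity)
  have hε : 0 < ε := by positivity
  have hε1 : ε ≤ 1 := inv_le_one_of_one_le₀ hroot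
  have hNε : N * ε ^ (2 * k + 1 + 1) = 1 := by
    rw [hε_def, inv_pow, ← Real.rpow_natCast, ← Real.rpow_mul hN0.le]
    have : (1 : ℝ) / (2 * (k : ℝ) + 2) * ((2 * k + 1 + 1 : ℕ) : ℝ) = 1 := by
      push_cast; field_simp; ring
    rw [this, Real.rpow_one, mul_inv_cancel₀ hN0.ne']
  have hscale : (N : ℝ) ^ ((2*(k:ℝ)+1)/(2*(k:ℝ)+2)) = N * ε := by
    rw [hε_def, ← Real.rpow_neg hN0.le, ← Real.rpow_one_add' hN0.le]
    · congr 1; field_simp; ring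
    · have : 1 + -(1 / (2 * (k : ℝ) + 2)) = (2*(k:ℝ)+1)/(2*(k:ℝ)+2) := by field_simp; ring
      rw [this]; positivity
  have hfinal : |probConf N J h (fun σ => ((Msum σ : ℝ) - N * m₀) / (N * ε) ≤ z) -
      expCDF d (2 * k + 1 + 1) z / ∫ t : ℝ, Real.exp (-(d * t ^ (2 * k + 1 + 1)))| ≤
      (K + N₀) * ε := by
    rcases le_or_gt N₀ N with hNN | hNN
    · refine (hbound N ε hNN hε hε1 hNε z).trans ?_
      gcongr
      linarith [Nat.cast_nonneg (α := ℝ) N₀]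
    · obtain ⟨p0, p1⟩ := probConf_mem_Icc N J h
        (fun σ => ((Msum σ : ℝ) - N * m₀) / (N * ε) ≤ z)
      have c0 := expCDF_nonneg d (2 * k + 1 + 1) z
      have c1 := expCDF_le_integral hp (by omega) hd z
      have r0 := div_nonneg c0 (c0.trans c1)
      have r1 := div_le_one_of_le₀ c1 (c0.trans c1)
      have hNN' : (N : ℝ) ≤ N₀ := by exact_mod_cast hNN.le
      have hpow : ε ^ (2 * k + 1 + 1) ≤ ε := pow_le_of_le_one hε.le hε1 (by omega)
      have : 1 ≤ N₀ * ε := by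
        rw [← hNε]; gcongr
      have : 0 ≤ K * ε := by positivity
      rw [abs_le]
      constructor <;> linarith
  intro d'
  rw [hscale, div_eq_mul_inv _ ((N : ℝ) ^ ((1 : ℝ) / (2 * (k : ℝ) + 2)))]
  exact hfinal
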